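/- arXiv:2005.02448 — 3 statements merged into one kernel-verified Lean document; each statement's English description precedes it below -/
import Mathlib

section
/- Let σ = [[a,b],[c,d]] ∈ GL_2(F_q) with ac ≠ 0, and f(x) = x^n - A irreducible over F_q with a^n - c^n A ≠ 0. Let α be a root of g = P_σ(f) in F_{q^n}. Then the trace of α from F_{q^n} to F_q equals n·(c^{n-1} d A - b a^{n-1})/(a^n - c^n A). In particular, α is normal over F_q if and only if Tr_{F_{q^n}/F_q}(α) ≠ 0. -/
open Polynomial Module

/-- `P_σ(f)(x) = (cx+d)^n f((ax+b)/(cx+d))` as a polynomial, for `n = deg f`. -/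
noncomputable def Pmat {K : Type} [Field K] (a b c d : K) (f : Polynomial K) : Polynomial K :=
  ∑ i ∈ Finset.range (f.natDegree + 1),
    C (f.coeff i) * (C a * X + C b) ^ i * (C c * X + C d) ^ (f.natDegree - i)

/-!
Write `q = #K`. The element `β = (aα + b) / (cα + d)` satisfies `β ^ n = A`, so the powers of `β`
form a basis `e` of `L` indexed by `ZMod n`, in which the trace is `n` times the constant
coordinate. Inverting the Möbius map and summing a geometric series gives all coordinates of `α`:
the nonconstant ones never vanish, and the constant one is the fraction in the trace formula.

It remains to see that an element `w` without zero coordinates is normal. Frobenius `Φ` permutes the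
lines spanned by the `e j` through multiplication by `q` on `ZMod n`. Diagonal operators in the
basis `e` whose entries are constant on the orbits of this permutation commute with `Φ`, so they are
polynomials in `Φ` because `L` has a normal basis, and they are fixed by `T ↦ T ^ q`. Since
`(∑ cᵢ Φ ^ i) ^ q = ∑ cᵢ Φ ^ (q i)`, the fixed points of `T ↦ T ^ q` in `K[Φ]` are the combinations
whose coefficients `c` are constant on the same orbits. Both families have the same dimension, so
they coincide. If now `T` in `K[Φ]` kills `w`, then a power of `T` is an idempotent generating the
same ideal of `K[Φ]`; it is diagonal and kills `w`, so it is zero, and so is `T`.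
-/

theorem pow_zmod_val_natCast {M : Type*} [Monoid M] {n : ℕ} {x : M} (hx : x ^ n = 1) (m : ℕ) :
    x ^ (m : ZMod n).val = x ^ m := by
  rw [ZMod.val_natCast, ← pow_eq_pow_mod m hx]

theorem linearIndependent_zmod_val_iff_fin {K V : Type*} [Semiring K] [AddCommMonoid V] [Module K V]
    {n : ℕ} [NeZero n] (f : ℕ → V) :
    (LinearIndependent K fun i : ZMod n => f i.val) ↔ LinearIndependent K fun i : Fin n => f i := by
  obtain ⟨m, rfl⟩ := Nat.exists_eq_succ_of_ne_zero (NeZero.ne n)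
  rfl

section PowCard

variable {K R : Type*} [Field K] [Fintype K] [Semiring R] [Algebra K R]

theorem aeval_pow_card (x : R) (p : K[X]) :
    aeval x p ^ Fintype.card K = aeval (x ^ Fintype.card K) p := by
  rw [← map_pow, ← FiniteField.expand_card, expand_aeval]

theorem aeval_pow_card_pow (x : R) (p : K[X]) (k : ℕ) :
    aeval x p ^ Fintype.card K ^ k = aeval (x ^ Fintype.card K ^ k) p := by
  induction k with
  | zero => simp only [pow_zero, pow_one]
  | succ k ih => rw [pow_succ, pow_mul, ih, aeval_pow_card, ← pow_mul]

theorem aeval_pow_card_pow_totient {n : ℕ} {x : R} (hx : x ^ n = 1)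
    (hn : (Fintype.card K).Coprime n) (p : K[X]) :
    aeval x p ^ Fintype.card K ^ n.totient = aeval x p := by
  have hmod : x ^ Fintype.card K ^ n.totient = x := by
    rw [pow_eq_pow_of_modEq (Nat.ModEq.pow_totient hn) hx, pow_one]
  rw [aeval_pow_card_pow, hmod]

end PowCard

theorem isIdempotentElem_pow_of_pow_add_two_eq_self {M : Type*} [Monoid M] {x : M} {r : ℕ}
    (hx : x ^ (r + 2) = x) : IsIdempotentElem (x ^ (r + 1)) := by
  rw [IsIdempotentElem, ← pow_add, show r + 1 + (r + 1) = r + 2 + r by ring, pow_add, hx,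
    ← pow_succ']

section CyclicComb

/-- The combination `∑ i, c i • x ^ i` of powers of `x`. Indexing by `ZMod n` is meant for elements
with `x ^ n = 1`, for which these are the values of the group algebra of `ZMod n` at `x`. -/
noncomputable def cyclicComb {K R : Type*} {n : ℕ} [NeZero n] [CommSemiring K] [Semiring R]
    [Algebra K R] (x : R) : (ZMod n → K) →ₗ[K] R :=
  Fintype.linearCombination K fun i : ZMod n => x ^ i.val

/-- The functions on `ZMod n` that are constant on the orbits of multiplication by `u`. -/
def orbitFunctions {n : ℕ} (K : Type*) [Semiring K] (u : (ZMod n)ˣ) : Submodule K (ZMod n → K) where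
  carrier := {c | ∀ i, c (u • i) = c i}
  add_mem' hc hd i := congrArg₂ (· + ·) (hc i) (hd i)
  zero_mem' _ := rfl
  smul_mem' s _ hc i := congrArg (s * ·) (hc i)

variable {K R : Type*} {n : ℕ} [NeZero n]

theorem cyclicComb_eq_aeval [CommSemiring K] [Semiring R] [Algebra K R] (x : R) (c : ZMod n → K) :
    cyclicComb x c = aeval x (∑ i, C (c i) * X ^ i.val) := by
  simp [cyclicComb, Fintype.linearCombination_apply, Algebra.smul_def]

theorem commute_cyclicComb_self [CommSemiring K] [Semiring R] [Algebra K R] (x : R)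
    (c : ZMod n → K) : Commute (cyclicComb x c) x :=
  Commute.sum_left _ _ _ fun _ _ => ((Commute.refl x).pow_left _).smul_left _

variable [Field K] [Fintype K] [Semiring R] [Algebra K R]

theorem cyclicComb_pow_card {x : R} (hx : x ^ n = 1) (u : (ZMod n)ˣ)
    (hu : (u : ZMod n) = Fintype.card K) (c : ZMod n → K) :
    cyclicComb x c ^ Fintype.card K = cyclicComb x fun i => c (u⁻¹ • i) := by
  have hpow (i : ZMod n) : x ^ (u • i).val = (x ^ Fintype.card K) ^ i.val := by
    rw [← pow_mul, ← pow_zmod_val_natCast hx (Fintype.card K * i.val), Nat.cast_mul,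
      ZMod.natCast_zmod_val, ← hu, Units.smul_def, smul_eq_mul]
  rw [cyclicComb_eq_aeval, aeval_pow_card, ← cyclicComb_eq_aeval]
  simp only [cyclicComb, Fintype.linearCombination_apply]
  rw [← Equiv.sum_comp (MulAction.toPerm u) fun i => c (u⁻¹ • i) • x ^ i.val]
  simp only [MulAction.toPerm_apply, inv_smul_smul, hpow]

theorem mem_orbitFunctions_of_cyclicComb_pow_card {x : R} (hx : x ^ n = 1)
    (hinj : Function.Injective (cyclicComb x : (ZMod n → K) →ₗ[K] R)) {u : (ZMod n)ˣ}
    (hu : (u : ZMod n) = Fintype.card K) {c : ZMod n → K}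
    (hc : cyclicComb x c ^ Fintype.card K = cyclicComb x c) : c ∈ orbitFunctions K u := by
  intro i
  have h := congrFun (hinj ((cyclicComb_pow_card hx u hu c).symm.trans hc)) (u • i)
  rw [← h, inv_smul_smul]

end CyclicComb

section DiagonalEnd

variable {ι K V : Type*} [Fintype ι] [DecidableEq ι] [CommRing K] [AddCommGroup V] [Module K V]
  (e : Basis ι K V)

/-- The algebra of endomorphisms that are diagonal in the basis `e`, parametrized by their diagonal
entries. -/
noncomputable def diagonalEnd : (ι → K) →ₐ[K] End K V :=
  (Matrix.toLinAlgEquiv e).toAlgHom.comp (Matrix.diagonalAlgHom K)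

theorem repr_diagonalEnd_apply (h : ι → K) (x : V) (j : ι) :
    e.repr (diagonalEnd e h x) j = h j * e.repr x j := by
  simp [diagonalEnd, Matrix.toLinAlgEquiv_apply, Matrix.mulVec_diagonal, Finsupp.single_apply]

theorem diagonalEnd_apply_basis (h : ι → K) (j : ι) : diagonalEnd e h (e j) = h j • e j := by
  simp [diagonalEnd, Matrix.toLinAlgEquiv_self, Matrix.diagonal_apply]

theorem diagonalEnd_injective : Function.Injective (diagonalEnd e) :=
  (Matrix.toLinAlgEquiv e).injective.comp Matrix.diagonal_injective

theorem diagonalEnd_eq_zero_of_apply_eq_zero [NoZeroDivisors K] {h : ι → K} {w : V}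
    (hw : ∀ j, e.repr w j ≠ 0) (hz : diagonalEnd e h w = 0) : diagonalEnd e h = 0 := by
  have h0 : h = 0 := funext fun j => by
    have hj := repr_diagonalEnd_apply e h w j
    rw [hz, map_zero, Finsupp.zero_apply] at hj
    exact (mul_eq_zero.1 hj.symm).resolve_right (hw j)
  rw [h0, map_zero]

end DiagonalEnd

section CyclicOperator

variable {K V : Type*} [AddCommGroup V] {n : ℕ} [NeZero n]

theorem cyclicComb_injective [CommRing K] [Module K V] {Φ : End K V} {v : V}
    (hv : LinearIndependent K fun i : ZMod n => (Φ ^ i.val) v) :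
    Function.Injective (cyclicComb Φ : (ZMod n → K) →ₗ[K] End K V) :=
  (LinearIndependent.of_comp (LinearMap.applyₗ v) hv).fintypeLinearCombination_injective

theorem commute_diagonalEnd [CommRing K] [Module K V] {Φ : End K V} {u : (ZMod n)ˣ}
    {e : Basis (ZMod n) K V}
    (he : ∀ j, Φ (e j) ∈ Submodule.span K {e (u • j)}) {h : ZMod n → K}
    (hh : h ∈ orbitFunctions K u) : Commute (diagonalEnd e h) Φ := by
  refine e.ext fun j => ?_
  obtain ⟨s, hs⟩ := Submodule.mem_span_singleton.1 (he j)
  rw [Module.End.mul_apply, Module.End.mul_apply, diagonalEnd_apply_basis, map_smul, ← hs, map_smul,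
    diagonalEnd_apply_basis, hh, smul_comm]

variable [Field K] [Module K V] {Φ : End K V} {v : V}

theorem exists_eq_cyclicComb_of_commute (hrank : finrank K V = n)
    (hv : LinearIndependent K fun i : ZMod n => (Φ ^ i.val) v) {T : End K V} (hT : Commute T Φ) :
    ∃ c : ZMod n → K, T = cyclicComb Φ c := by
  let b := basisOfLinearIndependentOfCardEqFinrank hv (by rw [ZMod.card, hrank])
  have hb (i : ZMod n) : b i = (Φ ^ i.val) v := by simp [b]
  have hcomb : cyclicComb Φ (b.repr (T v)) v = T v := by
    conv_rhs => rw [← b.sum_repr (T v)]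
    simp [cyclicComb, Fintype.linearCombination_apply, LinearMap.sum_apply, hb]
  have hcomm := commute_cyclicComb_self Φ (b.repr (T v))
  refine ⟨b.repr (T v), b.ext fun i => ?_⟩
  rw [hb, ← Module.End.mul_apply, ← Module.End.mul_apply, (hT.pow_right _).eq,
    (hcomm.pow_right _).eq, Module.End.mul_apply, Module.End.mul_apply, hcomb]

variable [Fintype K]

theorem map_diagonalEnd_eq_map_cyclicComb (hΦ : Φ ^ n = 1)
    (hv : LinearIndependent K fun i : ZMod n => (Φ ^ i.val) v) {u : (ZMod n)ˣ}
    (hu : (u : ZMod n) = Fintype.card K) {e : Basis (ZMod n) K V}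
    (he : ∀ j, Φ (e j) ∈ Submodule.span K {e (u • j)}) :
    (orbitFunctions K u).map (diagonalEnd e).toLinearMap =
      (orbitFunctions K u).map (cyclicComb Φ) := by
  have hrank : finrank K V = n := by rw [finrank_eq_card_basis e, ZMod.card]
  have hinj := cyclicComb_injective hv
  refine Submodule.eq_of_le_of_finrank_eq ?_ ?_
  · rintro _ ⟨h, hh, rfl⟩
    obtain ⟨c, hc⟩ := exists_eq_cyclicComb_of_commute hrank hv (commute_diagonalEnd he hh)
    have hfix : diagonalEnd e h ^ Fintype.card K = diagonalEnd e h := by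
      rw [← map_pow]
      exact congrArg _ (funext fun j => FiniteField.pow_card (h j))
    rw [AlgHom.toLinearMap_apply, hc]
    rw [hc] at hfix
    exact ⟨c, mem_orbitFunctions_of_cyclicComb_pow_card hΦ hinj hu hfix, rfl⟩
  · exact (Submodule.equivMapOfInjective _ (diagonalEnd_injective e) _).finrank_eq.symm.trans
      (Submodule.equivMapOfInjective _ hinj _).finrank_eq

theorem eq_zero_of_commute_of_apply_eq_zero (hΦ : Φ ^ n = 1)
    (hv : LinearIndependent K fun i : ZMod n => (Φ ^ i.val) v) (hn : (Fintype.card K).Coprime n)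
    {e : Basis (ZMod n) K V}
    (he : ∀ j, Φ (e j) ∈ Submodule.span K {e (ZMod.unitOfCoprime _ hn • j)})
    {w : V} (hw : ∀ j, e.repr w j ≠ 0) {T : End K V} (hT : Commute T Φ) (hTw : T w = 0) :
    T = 0 := by
  have hrank : finrank K V = n := by rw [finrank_eq_card_basis e, ZMod.card]
  have hu : (ZMod.unitOfCoprime _ hn : ZMod n) = Fintype.card K := ZMod.coe_unitOfCoprime _ hn
  obtain ⟨r, hr⟩ : ∃ r, Fintype.card K ^ n.totient = r + 2 := Nat.exists_eq_add_of_le' <|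
    (Fintype.one_lt_card (α := K)).trans_le
      (Nat.le_self_pow (Nat.totient_pos.2 (NeZero.pos n)).ne' _)
  have hper : T ^ (r + 2) = T := by
    obtain ⟨c, rfl⟩ := exists_eq_cyclicComb_of_commute hrank hv hT
    rw [← hr, cyclicComb_eq_aeval, aeval_pow_card_pow_totient hΦ hn]
  obtain ⟨c, hc⟩ := exists_eq_cyclicComb_of_commute hrank hv (hT.pow_left (r + 1))
  have hfix : cyclicComb Φ c ^ Fintype.card K = cyclicComb Φ c := by
    rw [← hc]
    exact (isIdempotentElem_pow_of_pow_add_two_eq_self hper).pow_eq Fintype.card_ne_zero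
  obtain ⟨h, -, hh⟩ : T ^ (r + 1) ∈ (orbitFunctions K _).map (diagonalEnd e).toLinearMap := by
    rw [map_diagonalEnd_eq_map_cyclicComb hΦ hv hu he, hc]
    exact ⟨c, mem_orbitFunctions_of_cyclicComb_pow_card hΦ (cyclicComb_injective hv) hu hfix, rfl⟩
  rw [AlgHom.toLinearMap_apply] at hh
  have hzero : T ^ (r + 1) = 0 := by
    rw [← hh]
    refine diagonalEnd_eq_zero_of_apply_eq_zero e hw ?_
    rw [hh, pow_succ, Module.End.mul_apply, hTw, map_zero]
  rw [← hper, pow_succ, hzero, zero_mul]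

theorem linearIndependent_pow_apply_of_repr_ne_zero (hΦ : Φ ^ n = 1)
    (hv : LinearIndependent K fun i : ZMod n => (Φ ^ i.val) v) (hn : (Fintype.card K).Coprime n)
    {e : Basis (ZMod n) K V}
    (he : ∀ j, Φ (e j) ∈ Submodule.span K {e (ZMod.unitOfCoprime _ hn • j)})
    {w : V} (hw : ∀ j, e.repr w j ≠ 0) :
    LinearIndependent K fun i : ZMod n => (Φ ^ i.val) w := by
  refine Fintype.linearIndependent_iff.2 fun g hg => ?_
  have hgw : cyclicComb Φ g w = 0 := by
    simpa [cyclicComb, Fintype.linearCombination_apply, LinearMap.sum_apply] using hg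
  have hg0 : cyclicComb Φ g = 0 :=
    eq_zero_of_commute_of_apply_eq_zero hΦ hv hn he hw (commute_cyclicComb_self Φ g) hgw
  exact congrFun (cyclicComb_injective hv (hg0.trans (map_zero _).symm))

end CyclicOperator

section Frobenius

variable {K L : Type*} [Field K] [Fintype K] [Field L] [Algebra K L] {n : ℕ}

theorem frobenius_pow_apply {R : Type*} [CommRing R] [Algebra K R] (k : ℕ) (x : R) :
    ((FiniteField.frobeniusAlgHom K R).toLinearMap ^ k) x = x ^ Fintype.card K ^ k := by
  simp [Module.End.coe_pow, FiniteField.coe_frobeniusAlgHom]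

theorem trace_ne_zero_of_linearIndependent_pow_card [NeZero n] (hrank : finrank K L = n) {x : L}
    (hx : LinearIndependent K fun i : Fin n => x ^ Fintype.card K ^ (i : ℕ)) :
    Algebra.trace K L x ≠ 0 := by
  have : FiniteDimensional K L := .of_finrank_pos (hrank ▸ NeZero.pos n)
  have : Finite L := Module.finite_of_finite K
  intro h0
  have hsum : ∑ i : Fin n, (1 : K) • x ^ Fintype.card K ^ (i : ℕ) = 0 := by
    simp only [one_smul]
    rw [← Finset.sum_range fun i => x ^ Fintype.card K ^ i, ← hrank, ← Nat.card_eq_fintype_card,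
      ← FiniteField.algebraMap_trace_eq_sum_pow K L x, h0, map_zero]
  exact one_ne_zero (Fintype.linearIndependent_iff.1 hx _ hsum 0)

variable (K L) in
theorem exists_linearIndependent_pow_card [FiniteDimensional K L] :
    ∃ v : L, LinearIndependent K fun i : Fin (finrank K L) => v ^ Fintype.card K ^ (i : ℕ) := by
  have : Finite L := Module.finite_of_finite K
  obtain ⟨v, hv⟩ := exists_linearIndependent_algEquiv_apply K L
  have hpow := hv.comp _ (FiniteField.bijective_frobeniusAlgEquivOfAlgebraic_pow K L).injective
  refine ⟨v, ?_⟩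
  simpa only [Function.comp_def, AlgEquiv.coe_pow,
    FiniteField.coe_frobeniusAlgEquivOfAlgebraic_iterate] using hpow

end Frobenius

section Radical

variable {K L : Type*} {n : ℕ}

section CommRing

variable [CommRing K] [CommRing L] [Algebra K L]

theorem pow_eq_smul_basis {A : K} {β : L} (hβ : β ^ n = algebraMap K L A)
    {e : Basis (ZMod n) K L} (he : ∀ j, e j = β ^ j.val) (m : ℕ) :
    β ^ m = A ^ (m / n) • e (m : ZMod n) := by
  rw [he, ZMod.val_natCast, Algebra.smul_def, map_pow, ← hβ, ← pow_mul, ← pow_add,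
    Nat.div_add_mod]

variable [NeZero n]

theorem trace_eq_natCast_mul_repr_zero {A : K} {β : L} (hβ : β ^ n = algebraMap K L A)
    {e : Basis (ZMod n) K L} (he : ∀ j, e j = β ^ j.val) (x : L) :
    Algebra.trace K L x = n * e.repr x 0 := by
  suffices h : Algebra.trace K L = (n : K) • e.coord 0 by simp [h]
  refine e.ext fun j => ?_
  have hdiag (i : ZMod n) : Algebra.leftMulMatrix e (e j) i i = if j = 0 then 1 else 0 := by
    rw [Algebra.leftMulMatrix_eq_repr_mul, he, he, ← pow_add, pow_eq_smul_basis hβ he]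
    by_cases hj : j = 0
    · simp [hj, Nat.div_eq_of_lt i.val_lt]
    · simp [hj]
  rw [Algebra.trace_eq_matrix_trace e, Matrix.trace]
  simp [hdiag, Finsupp.single_apply]

theorem repr_sum_smul_pow {β : L} {e : Basis (ZMod n) K L} (he : ∀ j, e j = β ^ j.val) (k : ℕ → K)
    (j : ZMod n) : e.repr (∑ i ∈ Finset.range n, k i • β ^ i) j = k j.val := by
  have hsum : ∑ i ∈ Finset.range n, k i • β ^ i = ∑ i : ZMod n, k i.val • e i := by
    simp only [he]
    obtain ⟨m, rfl⟩ := Nat.exists_eq_succ_of_ne_zero (NeZero.ne n)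
    exact Finset.sum_range _
  rw [hsum, Basis.repr_sum_self]

end CommRing

variable [NeZero n] [Field K] [Field L] [Algebra K L]

theorem exists_basis_pow_of_irreducible (hrank : finrank K L = n) {A : K}
    (hirr : Irreducible ((X : K[X]) ^ n - C A)) {β : L} (hβ : β ^ n = algebraMap K L A) :
    ∃ e : Basis (ZMod n) K L, ∀ j, e j = β ^ j.val := by
  have hmin : minpoly K β = X ^ n - C A :=
    (minpoly.eq_of_irreducible_of_monic hirr (by simp [hβ])
      (monic_X_pow_sub_C A (NeZero.ne n))).symm
  have hdeg : (minpoly K β).natDegree = n := by rw [hmin, natDegree_X_pow_sub_C]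
  have hli : LinearIndependent K fun j : ZMod n => β ^ j.val :=
    (linearIndependent_zmod_val_iff_fin (β ^ ·)).2 (hdeg ▸ linearIndependent_pow (K := K) β)
  exact ⟨basisOfLinearIndependentOfCardEqFinrank hli (by rw [ZMod.card, hrank]), fun j => by simp⟩

theorem linearIndependent_pow_card_of_repr_ne_zero [Fintype K] (hn : (Fintype.card K).Coprime n)
    {A : K} {β : L} (hβ : β ^ n = algebraMap K L A) {e : Basis (ZMod n) K L}
    (he : ∀ j, e j = β ^ j.val) {w : L} (hw : ∀ j, e.repr w j ≠ 0) :
    LinearIndependent K fun i : Fin n => w ^ Fintype.card K ^ (i : ℕ) := by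
  have hrank : finrank K L = n := by rw [finrank_eq_card_basis e, ZMod.card]
  have : FiniteDimensional K L := e.finiteDimensional_of_finite
  have : Fintype L := Module.fintypeOfFintype e
  set Φ := (FiniteField.frobeniusAlgHom K L).toLinearMap
  have hΦ : Φ ^ n = 1 := LinearMap.ext fun x => by
    rw [frobenius_pow_apply, ← hrank, ← Module.card_eq_pow_finrank, FiniteField.pow_card,
      Module.End.one_apply]
  have heΦ (j : ZMod n) : Φ (e j) ∈ Submodule.span K {e (ZMod.unitOfCoprime _ hn • j)} := by
    refine Submodule.mem_span_singleton.2 ⟨A ^ (j.val * Fintype.card K / n), ?_⟩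
    rw [← pow_one Φ, frobenius_pow_apply, pow_one, he j, ← pow_mul, pow_eq_smul_basis hβ he]
    simp [Units.smul_def, mul_comm]
  obtain ⟨v, hv⟩ := exists_linearIndependent_pow_card K L
  rw [hrank, ← linearIndependent_zmod_val_iff_fin (v ^ Fintype.card K ^ ·)] at hv
  rw [← linearIndependent_zmod_val_iff_fin (w ^ Fintype.card K ^ ·)]
  simp only [← frobenius_pow_apply] at hv ⊢
  exact linearIndependent_pow_apply_of_repr_ne_zero hΦ hv hn heΦ hw

end Radical

theorem card_coprime_of_natCast_ne_zero {K : Type*} [Field K] [Fintype K] {n : ℕ}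
    (hn : (n : K) ≠ 0) : (Fintype.card K).Coprime n := by
  obtain ⟨p, _⟩ := CharP.exists K
  obtain ⟨k, hp, hk⟩ := FiniteField.card K p
  rw [hk]
  refine Nat.Coprime.pow_left _ (hp.coprime_iff_not_dvd.2 fun h => hn ?_)
  exact (CharP.cast_eq_zero_iff K p n).2 h

theorem natCast_ne_zero_of_irreducible_X_pow_sub_C {K : Type*} [Field K] [PerfectField K] {n : ℕ}
    {A : K} (hirr : Irreducible ((X : K[X]) ^ n - C A)) : (n : K) ≠ 0 := by
  intro h
  have hsep : IsCoprime _ _ := PerfectField.separable_of_irreducible hirr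
  rw [derivative_sub, derivative_X_pow, derivative_C, h, map_zero, zero_mul, sub_zero,
    isCoprime_zero_right] at hsep
  exact hirr.not_isUnit hsep

section Moebius

theorem aeval_Pmat_X_pow_sub_C {K L : Type} [Field K] [Field L] [Algebra K L] {n : ℕ}
    (a b c d A : K) (α : L) :
    aeval α (Pmat a b c d (X ^ n - C A)) =
      (algebraMap K L a * α + algebraMap K L b) ^ n -
        algebraMap K L A * (algebraMap K L c * α + algebraMap K L d) ^ n := by
  rw [Pmat, natDegree_X_pow_sub_C]
  simp only [coeff_sub, coeff_X_pow, coeff_C, C_sub, sub_mul, Finset.sum_sub_distrib]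
  rw [Finset.sum_eq_single n (fun i _ hi => by simp [hi]) (by simp),
    Finset.sum_eq_single 0 (fun i _ hi => by simp [hi]) (by simp)]
  simp

theorem exists_pow_eq_of_aeval_Pmat_eq_zero {K L : Type} [Field K] [Field L] [Algebra K L] {n : ℕ}
    [NeZero n] {a b c d A : K} (hdet : a * d - b * c ≠ 0) {α : L}
    (hα : aeval α (Pmat a b c d (X ^ n - C A)) = 0) :
    ∃ β : L, β ^ n = algebraMap K L A ∧
      (algebraMap K L a - algebraMap K L c * β) * α = algebraMap K L d * β - algebraMap K L b := by
  rw [aeval_Pmat_X_pow_sub_C, sub_eq_zero] at hα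
  have hden : algebraMap K L c * α + algebraMap K L d ≠ 0 := by
    intro h
    rw [h, zero_pow (NeZero.ne n), mul_zero, pow_eq_zero_iff (NeZero.ne n)] at hα
    refine hdet ((algebraMap K L).injective ?_)
    rw [map_zero, map_sub, map_mul, map_mul]
    linear_combination algebraMap K L a * h - algebraMap K L c * hα
  refine ⟨(algebraMap K L a * α + algebraMap K L b) / (algebraMap K L c * α + algebraMap K L d),
    ?_, ?_⟩
  · rw [div_pow, hα, mul_div_cancel_right₀ _ (pow_ne_zero n hden)]
  · field_simp
    ring

/-- The coefficients in the powers of `β` of `(a ^ n - c ^ n * A) * ((d * β - b) / (a - c * β))`,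
where `β ^ n = A`. Only the values at `i < n` are meaningful. -/
def moebiusCoeff {K : Type*} [CommRing K] (a b c d A : K) (n : ℕ) : ℕ → K
  | 0 => c ^ (n - 1) * d * A - b * a ^ (n - 1)
  | i + 1 => (a * d - b * c) * (c ^ i * a ^ (n - 2 - i))

theorem map_moebiusCoeff {K R : Type*} [CommRing K] [CommRing R] (φ : K →+* R) (a b c d A : K)
    (n i : ℕ) :
    φ (moebiusCoeff a b c d A n i) = moebiusCoeff (φ a) (φ b) (φ c) (φ d) (φ A) n i := by
  cases i <;> simp [moebiusCoeff]

theorem sub_mul_sum_moebiusCoeff {R : Type*} [CommRing R] {n : ℕ} [NeZero n] {a b c d A β : R}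
    (hβ : β ^ n = A) :
    (a - c * β) * ∑ i ∈ Finset.range n, moebiusCoeff a b c d A n i * β ^ i =
      (a ^ n - c ^ n * A) * (d * β - b) := by
  obtain ⟨m, rfl⟩ := Nat.exists_eq_add_one_of_ne_zero (NeZero.ne n)
  have hgeom : (∑ i ∈ Finset.range m, (c * β) ^ i * a ^ (m - 1 - i)) * (c * β - a) =
      (c * β) ^ m - a ^ m := (Commute.all _ _).geom_sum₂_mul m
  have hsum : ∑ i ∈ Finset.range (m + 1), moebiusCoeff a b c d A (m + 1) i * β ^ i =
      (a * d - b * c) * β * ∑ i ∈ Finset.range m, (c * β) ^ i * a ^ (m - 1 - i) +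
        (c ^ m * d * A - b * a ^ m) := by
    rw [Finset.sum_range_succ', Finset.mul_sum]
    refine congrArg₂ (· + ·) (Finset.sum_congr rfl fun i _ => ?_) (by simp [moebiusCoeff])
    rw [moebiusCoeff, show m + 1 - 2 = m - 1 by lia]
    ring
  rw [hsum]
  rw [mul_pow] at hgeom
  linear_combination -(a * d - b * c) * β * hgeom - (a * d - b * c) * c ^ m * hβ

theorem repr_eq_moebiusCoeff_div {K L : Type*} [Field K] [Field L] [Algebra K L] {n : ℕ} [NeZero n]
    {a b c d A : K} (hinf : a ^ n - c ^ n * A ≠ 0) {α β : L} (hβ : β ^ n = algebraMap K L A)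
    {e : Basis (ZMod n) K L} (he : ∀ j, e j = β ^ j.val)
    (hα : (algebraMap K L a - algebraMap K L c * β) * α =
      algebraMap K L d * β - algebraMap K L b) (j : ZMod n) :
    e.repr α j = moebiusCoeff a b c d A n j.val / (a ^ n - c ^ n * A) := by
  set φ := algebraMap K L
  have hne : φ a - φ c * β ≠ 0 := fun h => hinf <| φ.injective <| by
    rw [map_sub, map_mul, map_pow, map_pow, sub_eq_zero.1 h, mul_pow, hβ, sub_self, map_zero]
  have hsum : (a ^ n - c ^ n * A) • α =
      ∑ i ∈ Finset.range n, moebiusCoeff a b c d A n i • β ^ i := by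
    simp only [Algebra.smul_def, map_moebiusCoeff]
    refine mul_left_cancel₀ hne ?_
    rw [sub_mul_sum_moebiusCoeff hβ, ← hα, map_sub, map_mul, map_pow, map_pow]
    ring
  rw [eq_div_iff hinf, ← repr_sum_smul_pow he (moebiusCoeff a b c d A n), ← hsum, map_smul,
    Finsupp.smul_apply, smul_eq_mul, mul_comm]

theorem moebiusCoeff_ne_zero {K : Type*} [CommRing K] [IsDomain K] {a b c d : K} (ha : a ≠ 0)
    (hc : c ≠ 0) (hdet : a * d - b * c ≠ 0) (A : K) (n : ℕ) {i : ℕ} (hi : i ≠ 0) :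
    moebiusCoeff a b c d A n i ≠ 0 := by
  obtain ⟨i, rfl⟩ := Nat.exists_eq_add_one_of_ne_zero hi
  exact mul_ne_zero hdet (mul_ne_zero (pow_ne_zero _ hc) (pow_ne_zero _ ha))

end Moebius

/-- With `ac ≠ 0`, `f = x^n - A` irreducible, `a^n - c^n A ≠ 0` and `α` a root of
`g = P_σ(f)` in `F_{q^n}`: the trace of `α` equals `n (c^{n-1} d A - b a^{n-1})/(a^n - c^n A)`;
in particular `α` is normal over `F_q` iff `Tr(α) ≠ 0`. -/
theorem stmt_8 (K L : Type) [Field K] [Fintype K] [Field L] [Algebra K L]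
    (q n : ℕ) (hq : Fintype.card K = q) (hrank : Module.finrank K L = n)
    (a b c d A : K) (ha : a ≠ 0) (hc : c ≠ 0) (hdet : a * d - b * c ≠ 0)
    (hirr : Irreducible ((X : Polynomial K) ^ n - C A))
    (hinf : a ^ n - c ^ n * A ≠ 0)
    (α : L) (hα : aeval α (Pmat a b c d ((X : Polynomial K) ^ n - C A)) = 0) :
    Algebra.trace K L α =
        (n : K) * ((c ^ (n - 1) * d * A - b * a ^ (n - 1)) / (a ^ n - c ^ n * A)) ∧
      ((∃ bas : Basis (Fin n) K L, ∀ i : Fin n, bas i = α ^ q ^ (i : ℕ)) ↔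
        Algebra.trace K L α ≠ 0) := by
  subst hq
  have : NeZero n := ⟨ne_zero_of_irreducible_X_pow_sub_C hirr⟩
  have hcop := card_coprime_of_natCast_ne_zero (natCast_ne_zero_of_irreducible_X_pow_sub_C hirr)
  obtain ⟨β, hβ, hαβ⟩ := exists_pow_eq_of_aeval_Pmat_eq_zero hdet hα
  obtain ⟨e, he⟩ := exists_basis_pow_of_irreducible hrank hirr hβ
  have hrepr := repr_eq_moebiusCoeff_div hinf hβ he hαβ
  have htrace := trace_eq_natCast_mul_repr_zero hβ he α
  refine ⟨by rw [htrace, hrepr, ZMod.val_zero, moebiusCoeff], fun ⟨bas, hbas⟩ => ?_, fun h0 => ?_⟩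
  · refine trace_ne_zero_of_linearIndependent_pow_card hrank ?_
    exact (funext hbas : ⇑bas = _) ▸ bas.linearIndependent
  · have hcoord (j : ZMod n) : e.repr α j ≠ 0 := by
      rcases eq_or_ne j 0 with rfl | hj
      · exact right_ne_zero_of_mul (htrace ▸ h0)
      · rw [hrepr]
        exact div_ne_zero (moebiusCoeff_ne_zero ha hc hdet A n ((ZMod.val_ne_zero j).2 hj)) hinf
    have hli := linearIndependent_pow_card_of_repr_ne_zero hcop hβ he hcoord
    exact ⟨basisOfLinearIndependentOfCardEqFinrank hli (by rw [Fintype.card_fin, hrank]),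
      fun i => by simp⟩
end

section
/- Let q ≡ 1 (mod 4) be a prime power and g_1 = x^2 + ax + 1 irreducible over F_q. Define g_{k+1} = g_k^R where g^R(x) = (2x)^{deg g} g((x+1/x)/2). Then for every k ≥ 1, g_k is irreducible over F_q of degree 2^k, and every root of g_k is a completely normal element of F_{q^{2^k}} over F_q. -/
open Polynomial Module

/-- Cohen's R-transform: `g^R(x) = (2x)^{deg g} · g((x + 1/x)/2)` as a polynomial. -/
noncomputable def Rtrans {K : Type} [Field K] (g : Polynomial K) : Polynomial K :=
  ∑ i ∈ Finset.range (g.natDegree + 1),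
    C (g.coeff i) * (X ^ 2 + 1) ^ i * (2 * X) ^ (g.natDegree - i)

/-!
A root of the `k`-th iterate is the top of a tower `α₀, …, αₖ` with `αᵢ = (αᵢ₊₁ + αᵢ₊₁⁻¹) / 2` and
`α₀ = -a / 2`. Since `-1` is a square and `α₀ ^ 2 - 1` is not, the power `σ ^ 2 ^ i` of the
Frobenius `σ` inverts `αᵢ₊₁`. Shifting such a tower by `j` replaces `σ` by `σ ^ 2 ^ j`, so complete
normality reduces to normality.

As `-1` is a square, the irreducible factors of `X ^ 2 ^ n - 1` are binomials `X ^ 2 ^ r - η`, and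
after a shift by `r` normality means that no Lagrange resolvent `∏ (σ ^ 2 ^ i + ζ ^ 2 ^ i)` kills
the top of the tower. Apply its factors from the top down. As long as `ζ ^ 2 ^ i = 1`, they map
`αᵢ₊₁` to `2 αᵢ`. The first `ζ ^ 2 ^ i = -1` gives `δ = αᵢ₊₁⁻¹ - αᵢ₊₁`, whose square is
`4 (αᵢ - 1) (αᵢ + 1)`. From then on, with `A` the current level, `σ ^ 2 ^ i` maps `δ` to
`±ζ ^ 2 ^ i δ / A`, so that each factor multiplies `δ` by the nonzero `ζ ^ 2 ^ i (A ± 1) / A`.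
-/

section TwoPowerBinomial

variable {F : Type*} [Field F]

theorem irreducible_X_pow_two_pow_sub_C (s : ℕ) (hi : IsSquare (-1 : F)) {ζ : F}
    (hζ : ¬ IsSquare ζ) : Irreducible (X ^ 2 ^ s - C ζ : F[X]) := by
  induction s generalizing F with
  | zero => simpa using irreducible_X_sub_C ζ
  | succ s ih =>
    rw [pow_succ]
    refine X_pow_mul_sub_C_irreducible
      (X_pow_sub_C_irreducible_of_prime Nat.prime_two fun b hb => hζ ⟨b, by rw [← hb, sq]⟩) ?_
    intro E _ _ x hx
    have hxi : IsIntegral F x := by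
      by_contra h
      rw [minpoly.eq_zero h] at hx
      exact X_pow_sub_C_ne_zero two_pos ζ hx.symm
    -- If `x` were a square in `F(x)`, then so would be its norm `-ζ` in `F`.
    refine ih (by simpa using hi.map (algebraMap F (IntermediateField.adjoin F {x})))
      fun hsq => hζ ?_
    have hnorm := hsq.map (Algebra.norm F)
    rw [← IntermediateField.adjoin.powerBasis_gen hxi,
      Algebra.PowerBasis.norm_gen_eq_coeff_zero_minpoly] at hnorm
    simpa [IntermediateField.minpoly_gen, hx] using hi.mul hnorm

theorem exists_eq_X_pow_two_pow_sub_C_of_dvd (hi : IsSquare (-1 : F)) {p : F[X]} (hp : p.Monic)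
    (hirr : Irreducible p) {n : ℕ} {ζ : F} (hdvd : p ∣ X ^ 2 ^ n - C ζ) :
    ∃ r m : ℕ, ∃ η : F, r + m = n ∧ η ^ 2 ^ m = ζ ∧ p = X ^ 2 ^ r - C η := by
  induction n generalizing ζ with
  | zero =>
    rw [pow_zero, pow_one] at hdvd
    have hp_eq := eq_of_monic_of_associated hp (monic_X_sub_C ζ)
      (hirr.associated_of_dvd (irreducible_X_sub_C ζ) hdvd)
    exact ⟨0, 0, ζ, rfl, by simp, by simpa using hp_eq⟩
  | succ n ih =>
    by_cases hζ : IsSquare ζ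
    · obtain ⟨θ, rfl⟩ := hζ
      have hfactor : (X ^ 2 ^ (n + 1) - C (θ * θ) : F[X]) =
          (X ^ 2 ^ n - C θ) * (X ^ 2 ^ n - C (-θ)) := by
        simp only [map_neg, map_mul]; ring
      rw [hfactor] at hdvd
      obtain ⟨θ', hθ', hdvd'⟩ : ∃ θ', θ' ^ 2 = θ * θ ∧ p ∣ X ^ 2 ^ n - C θ' :=
        (hirr.prime.dvd_or_dvd hdvd).elim (⟨θ, sq θ, ·⟩) (⟨-θ, by ring, ·⟩)
      obtain ⟨r, m, η, hrm, hη, hpη⟩ := ih hdvd'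
      exact ⟨r, m + 1, η, by omega, by rw [pow_succ, pow_mul, hη, hθ'], hpη⟩
    · exact ⟨n + 1, 0, ζ, rfl, by simp, eq_of_monic_of_associated hp
        (monic_X_pow_sub_C ζ (by positivity))
        (hirr.associated_of_dvd (irreducible_X_pow_two_pow_sub_C (n + 1) hi hζ) hdvd)⟩

/-- The cofactor `(X ^ 2 ^ m - ζ ^ 2 ^ m) / (X - ζ)`, in factored form. If `ζ ^ 2 ^ m = 1`, its
value at an operator `σ` is, up to a scalar, the Lagrange resolvent `∑ ζ⁻ⁱ σⁱ` over `i < 2 ^ m`. -/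
noncomputable def lagrangeResolvent (m : ℕ) (ζ : F) : F[X] :=
  ∏ i ∈ Finset.range m, (X ^ 2 ^ i + C (ζ ^ 2 ^ i))

theorem X_pow_sub_C_mul_expand_lagrangeResolvent (r m : ℕ) (ζ : F) :
    (X ^ 2 ^ r - C ζ) * expand F (2 ^ r) (lagrangeResolvent m ζ) =
      X ^ 2 ^ (r + m) - C (ζ ^ 2 ^ m) := by
  have h := pow_two_pow_sub_pow_two_pow (x := (X : F[X])) (y := C ζ) m
  simp only [← map_pow] at h
  simpa [lagrangeResolvent, ← pow_mul, ← pow_add, mul_comm] using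
    (congrArg (expand F (2 ^ r)) h).symm

end TwoPowerBinomial

section Endomorphism

variable {F V : Type*} [Field F] [AddCommGroup V] [Module F V]

theorem dvd_of_forall_irreducible_aeval_apply_ne_zero (f : End F V) {M P : F[X]} {x : V}
    (hM : aeval f M x = 0)
    (hne : ∀ p Q : F[X], p.Monic → Irreducible p → M = p * Q → aeval f Q x ≠ 0)
    (hP : aeval f P x = 0) : M ∣ P := by
  classical
  obtain ⟨D, hD⟩ := EuclideanDomain.gcd_dvd_left M P
  have hgcd : aeval f (EuclideanDomain.gcd M P) x = 0 := by
    rw [EuclideanDomain.gcd_eq_gcd_ab, mul_comm M, mul_comm P, map_add, map_mul, map_mul,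
      LinearMap.add_apply, End.mul_apply, End.mul_apply, hM, hP, map_zero, map_zero, add_zero]
  by_cases hunit : IsUnit D
  · calc M ∣ EuclideanDomain.gcd M P := by
          conv_lhs => rw [hD]
          exact (hunit.mul_right_dvd).2 dvd_rfl
      _ ∣ P := EuclideanDomain.gcd_dvd_right M P
  · obtain ⟨p, hp, hirr, Q, rfl⟩ := exists_monic_irreducible_factor D hunit
    refine absurd ?_ (hne p (Q * EuclideanDomain.gcd M P) hp hirr ?_)
    · rw [map_mul, End.mul_apply, hgcd, map_zero]
    · rw [← mul_assoc, mul_comm, ← hD]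

theorem linearIndependent_pow_apply_of_forall_dvd (f : End F V) {M : F[X]} {n : ℕ}
    (hn : n ≤ M.degree) {x : V} (h : ∀ P, aeval f P x = 0 → M ∣ P) :
    LinearIndependent F fun i : Fin n => (f ^ (i : ℕ)) x := by
  rw [Fintype.linearIndependent_iff]
  intro c hc i
  have hzero : ∑ i, C (c i) * X ^ (i : ℕ) = (0 : F[X]) :=
    eq_zero_of_dvd_of_degree_lt (h _ (by simpa using hc)) ((degree_sum_fin_lt c).trans_le hn)
  simpa [finsetSum_coeff, coeff_C_mul_X_pow, Fin.val_inj] using congrArg (coeff · (i : ℕ)) hzero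

end Endomorphism

theorem exists_pow_eq_of_pow_two_pow_eq_neg_one {R : Type*} [CommRing R] [IsDomain R]
    (h2 : (2 : R) ≠ 0) {s : ℕ} {u v : R} (hu : u ^ 2 ^ s = -1) (hv : v ^ 2 ^ s = -1) :
    ∃ i : ℕ, v ^ i = u := by
  have hneg : (-1 : R) ≠ 1 := fun h => h2 (by linear_combination -h)
  have : Fact (Nat.Prime 2) := ⟨Nat.prime_two⟩
  have hord : orderOf v = 2 ^ (s + 1) :=
    orderOf_eq_prime_pow (hv ▸ hneg) (by rw [pow_succ, pow_mul, hv, neg_one_sq])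
  obtain ⟨i, -, hi⟩ := (hord ▸ IsPrimitiveRoot.orderOf v).eq_pow_of_pow_eq_one
    (show u ^ 2 ^ (s + 1) = 1 by rw [pow_succ, pow_mul, hu, neg_one_sq])
  exact ⟨i, hi⟩

section ReciprocalTower

variable {F L : Type*} [Field F] [Field L] [Algebra F L]

theorem algHom_toLinearMap_pow (σ : L →ₐ[F] L) (m : ℕ) :
    (σ ^ m).toLinearMap = σ.toLinearMap ^ m :=
  map_pow AlgHom.toEnd σ m

theorem aeval_lagrangeResolvent_succ (σ : L →ₐ[F] L) (m : ℕ) (ζ : F) (x : L) :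
    aeval σ.toLinearMap (lagrangeResolvent (m + 1) ζ) x =
      aeval σ.toLinearMap (lagrangeResolvent m ζ) ((σ ^ 2 ^ m) x + ζ ^ 2 ^ m • x) := by
  rw [lagrangeResolvent, Finset.prod_range_succ, map_mul, End.mul_apply, ← lagrangeResolvent,
    aeval_add, map_pow, aeval_X, aeval_C, LinearMap.add_apply, Module.algebraMap_end_apply,
    ← algHom_toLinearMap_pow, AlgHom.toLinearMap_apply]

variable (F) in
/-- `δ` is a `2 ^ s`-th root of `c (A - 1) ^ a (A + 1) ^ b` for some scalar `c : F` and exponents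
with `a` odd and `a + b = 2 ^ s`. The partial Lagrange resolvents of the top of a reciprocal tower
have this shape, with `A` running down the tower. -/
def IsOddRadical (s : ℕ) (A δ : L) : Prop :=
  ∃ (c : F) (a b : ℕ), Odd a ∧ a + b = 2 ^ s ∧
    δ ^ 2 ^ s = algebraMap F L c * (A - 1) ^ a * (A + 1) ^ b

namespace IsOddRadical

variable {s : ℕ} {A B δ : L}

theorem smul (h : IsOddRadical F s A δ) (η : F) : IsOddRadical F s A (η • δ) := by
  obtain ⟨c, a, b, ha, hab, hδ⟩ := h
  refine ⟨η ^ 2 ^ s * c, a, b, ha, hab, ?_⟩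
  rw [_root_.smul_pow, hδ, Algebra.smul_def, map_mul]
  ring

theorem map_mul_pow (h : IsOddRadical F s A δ) {τ : L →ₐ[F] L} (hτ : τ A * A = 1) :
    (τ δ * A) ^ 2 ^ s = -δ ^ 2 ^ s := by
  obtain ⟨c, a, b, ha, hab, hδ⟩ := h
  have hsub : (τ A - 1) * A = -(A - 1) := by linear_combination hτ
  have hadd : (τ A + 1) * A = A + 1 := by linear_combination hτ
  calc (τ δ * A) ^ 2 ^ s = τ (δ ^ 2 ^ s) * A ^ (a + b) := by rw [mul_pow, map_pow, hab]
    _ = algebraMap F L c * ((τ A - 1) * A) ^ a * ((τ A + 1) * A) ^ b := by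
        simp only [hδ, map_mul, map_pow, map_sub, map_add, map_one, AlgHom.commutes, mul_pow,
          pow_add]
        ring
    _ = -δ ^ 2 ^ s := by rw [hsub, hadd, ha.neg_pow, hδ]; ring

theorem map_mul_eq_or_eq_neg (h : IsOddRadical F s A δ) (h2 : (2 : L) ≠ 0) {τ : L →ₐ[F] L}
    (hτ : τ A * A = 1) {η : F} (hη : η ^ 2 ^ s = -1) (hδ : δ ≠ 0)
    (hττ : τ (τ δ) = η ^ 2 • δ) : τ δ * A = η • δ ∨ τ δ * A = -(η • δ) := by
  set u := τ δ * A / δ with hu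
  have hupow : u ^ 2 ^ s = -1 := by
    rw [hu, div_pow, h.map_mul_pow hτ, neg_div, div_self (pow_ne_zero _ hδ)]
  -- So `u` lies in `F` and is fixed by `τ`, whence `u ^ 2 = τ u * u = η ^ 2`.
  obtain ⟨i, hi⟩ := exists_pow_eq_of_pow_two_pow_eq_neg_one h2 hupow
    (show algebraMap F L η ^ 2 ^ s = -1 by rw [← map_pow, hη, map_neg, map_one])
  have hfix : τ u = u := by rw [← hi, ← map_pow, AlgHom.commutes]
  have hsq : u ^ 2 = algebraMap F L η ^ 2 := by
    have hτδ : τ δ ≠ 0 := (_root_.map_ne_zero τ).2 hδ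
    calc u ^ 2 = τ u * u := by rw [hfix, sq]
      _ = τ (τ δ) / δ * (τ A * A) := by
          rw [hu, map_div₀, map_mul]
          field_simp
      _ = algebraMap F L η ^ 2 := by
          rw [hττ, hτ, Algebra.smul_def, map_pow]
          field_simp
  rw [← div_mul_cancel₀ (τ δ * A) hδ, ← hu, Algebra.smul_def, ← neg_mul]
  exact (sq_eq_sq_iff_eq_or_eq_neg.1 hsq).imp (congrArg (· * δ)) (congrArg (· * δ))

theorem exists_map_add_smul_eq (h : IsOddRadical F s A δ) (h2 : (2 : L) ≠ 0) {τ : L →ₐ[F] L}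
    (hτ : τ A * A = 1) {η : F} (hη : η ^ 2 ^ s = -1) (hδ : δ ≠ 0) (hττ : τ (τ δ) = η ^ 2 • δ) :
    ∃ ε : L, (ε = 1 ∨ ε = -1) ∧ τ δ + η • δ = η • (δ * (A + ε) / A) := by
  have hA : A ≠ 0 := right_ne_zero_of_mul_eq_one hτ
  rcases h.map_mul_eq_or_eq_neg h2 hτ hη hδ hττ with hmul | hmul
  · refine ⟨1, .inl rfl, ?_⟩
    rw [eq_div_of_mul_eq hA hmul, Algebra.smul_def, Algebra.smul_def]
    field_simp
    ring
  · refine ⟨-1, .inr rfl, ?_⟩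
    rw [eq_div_of_mul_eq hA hmul, Algebra.smul_def, Algebra.smul_def]
    field_simp
    ring

theorem descend (h : IsOddRadical F s A δ) (hs : s ≠ 0) (hA : A ≠ 0)
    (hAB : A ^ 2 + 1 = 2 * B * A) {ε : L} (hε : ε = 1 ∨ ε = -1) :
    IsOddRadical F (s + 1) B (δ * (A + ε) / A) := by
  obtain ⟨c, a, b, ha, hab, hδ⟩ := h
  have hsub : (A - 1) ^ 2 = 2 * A * (B - 1) := by linear_combination hAB
  have hadd : (A + 1) ^ 2 = 2 * A * (B + 1) := by linear_combination hAB
  have hεA : (A + ε) ^ 2 / A ^ 2 = 2 * (B + ε) / A := by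
    rw [div_eq_div_iff (pow_ne_zero 2 hA) hA]
    rcases hε with rfl | rfl <;> linear_combination A * hAB
  have hδsq : (δ ^ 2 ^ s) ^ 2 =
      algebraMap F L c ^ 2 * (B - 1) ^ a * (B + 1) ^ b * (2 * A) ^ 2 ^ s := by
    rw [hδ, mul_pow, mul_pow, pow_right_comm (A - 1), pow_right_comm (A + 1), hsub, hadd, ← hab,
      mul_pow (2 * A) (B - 1), mul_pow (2 * A) (B + 1), pow_add (2 * A)]
    ring
  have hpow : (δ * (A + ε) / A) ^ 2 ^ (s + 1) =
      algebraMap F L (c ^ 2 * 4 ^ 2 ^ s) * (B - 1) ^ a * (B + 1) ^ b * (B + ε) ^ 2 ^ s := by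
    calc (δ * (A + ε) / A) ^ 2 ^ (s + 1)
        = (δ ^ 2 ^ s) ^ 2 * ((A + ε) ^ 2 / A ^ 2) ^ 2 ^ s := by
          rw [pow_right_comm δ, ← div_pow, ← mul_pow, ← mul_pow, pow_succ', pow_mul, mul_div_assoc]
      _ = algebraMap F L c ^ 2 * (B - 1) ^ a * (B + 1) ^ b *
          (2 * A * (2 * (B + ε) / A)) ^ 2 ^ s := by rw [hδsq, hεA, mul_pow (2 * A)]; ring
      _ = _ := by
          rw [show 2 * A * (2 * (B + ε) / A) = 4 * (B + ε) by field_simp; ring, mul_pow]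
          simp only [map_mul, map_pow, map_ofNat]
          ring
  have heven : Even (2 ^ s) := even_two.pow_of_ne_zero hs
  rcases hε with rfl | rfl
  · exact ⟨_, a, b + 2 ^ s, ha, by omega, by rw [hpow]; ring⟩
  · exact ⟨_, a + 2 ^ s, b, ha.add_even heven, by omega, by rw [hpow]; ring⟩

end IsOddRadical

/-- A tower `α 0, …, α n` with `α i = (α (i + 1) + (α (i + 1))⁻¹) / 2`, starting at a fixed point of
`σ`, such that `σ ^ 2 ^ i` exchanges `α (i + 1)` and its inverse. The values of `α` beyond `n` are
irrelevant. -/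
structure IsReciprocalTower (σ : L →ₐ[F] L) (α : ℕ → L) (n : ℕ) : Prop where
  zero_ne_zero : α 0 ≠ 0
  zero_sq_ne_one : α 0 ^ 2 ≠ 1
  map_zero : σ (α 0) = α 0
  sq_add_one : ∀ i < n, α (i + 1) ^ 2 + 1 = 2 * α i * α (i + 1)
  map_mul_self : ∀ i < n, (σ ^ 2 ^ i) (α (i + 1)) * α (i + 1) = 1

namespace IsReciprocalTower

variable {σ : L →ₐ[F] L} {α : ℕ → L} {n : ℕ}

theorem mono (h : IsReciprocalTower σ α n) {m : ℕ} (hm : m ≤ n) : IsReciprocalTower σ α m where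
  __ := h
  sq_add_one i hi := h.sq_add_one i (hi.trans_le hm)
  map_mul_self i hi := h.map_mul_self i (hi.trans_le hm)

theorem map_succ_eq_inv (h : IsReciprocalTower σ α n) {i : ℕ} (hi : i < n) :
    (σ ^ 2 ^ i) (α (i + 1)) = (α (i + 1))⁻¹ :=
  eq_inv_of_mul_eq_one_left (h.map_mul_self i hi)

theorem ne_zero (h : IsReciprocalTower σ α n) {i : ℕ} (hi : i ≤ n) : α i ≠ 0 := by
  cases i with
  | zero => exact h.zero_ne_zero
  | succ i => exact right_ne_zero_of_mul_eq_one (h.map_mul_self i hi)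

theorem sq_ne_one (h : IsReciprocalTower σ α n) (h2 : (2 : L) ≠ 0) {i : ℕ} (hi : i ≤ n) :
    α i ^ 2 ≠ 1 := by
  induction i with
  | zero => exact h.zero_sq_ne_one
  | succ i ih =>
    intro hsq
    have hrel := h.sq_add_one i hi
    have hmul : α i * α (i + 1) = 1 := mul_left_cancel₀ h2 (by linear_combination hsq - hrel)
    exact ih (by omega) (by linear_combination (α i * α (i + 1) + 1) * hmul - α i ^ 2 * hsq)

theorem map_eq_self (h : IsReciprocalTower σ α n) {i : ℕ} (hi : i ≤ n) :
    (σ ^ 2 ^ i) (α i) = α i := by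
  cases i with
  | zero => simpa using h.map_zero
  | succ i =>
    rw [pow_succ, mul_two, pow_add, AlgHom.mul_apply, h.map_succ_eq_inv hi, map_inv₀,
      h.map_succ_eq_inv hi, inv_inv]

theorem shift (h : IsReciprocalTower σ α n) (h2 : (2 : L) ≠ 0) {j : ℕ} (hj : j ≤ n)
    {E : Type*} [Field E] [Algebra E L] {τ : L →ₐ[E] L} (hτ : ⇑τ = ⇑(σ ^ 2 ^ j)) :
    IsReciprocalTower τ (fun i => α (j + i)) (n - j) where
  zero_ne_zero := h.ne_zero hj
  zero_sq_ne_one := h.sq_ne_one h2 hj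
  map_zero := by rw [hτ]; exact h.map_eq_self hj
  sq_add_one i hi := h.sq_add_one (j + i) (by omega)
  map_mul_self i hi := by
    rw [AlgHom.coe_pow, hτ, ← AlgHom.coe_pow, ← pow_mul, ← pow_add]
    exact h.map_mul_self (j + i) (by omega)

theorem aeval_lagrangeResolvent_ne_zero_of_isOddRadical (h : IsReciprocalTower σ α n)
    (h2 : (2 : L) ≠ 0) {t : ℕ} {ζ : F} (hζ : (ζ ^ 2 ^ n) ^ 2 ^ t = -1) {δ : L} (hδ : δ ≠ 0)
    (hσ : (σ ^ 2 ^ n) δ = ζ ^ 2 ^ n • δ) (hrad : IsOddRadical F (t + 1) (α n) δ) :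
    aeval σ.toLinearMap (lagrangeResolvent n ζ) δ ≠ 0 := by
  induction n generalizing t δ with
  | zero => simpa [lagrangeResolvent] using hδ
  | succ n ih =>
    rw [aeval_lagrangeResolvent_succ]
    set τ := σ ^ 2 ^ n
    set η := ζ ^ 2 ^ n
    have hη : η ^ 2 = ζ ^ 2 ^ (n + 1) := by rw [← pow_mul, ← pow_succ]
    have hηt : η ^ 2 ^ (t + 1) = -1 := by rw [pow_succ', pow_mul, hη, hζ]
    have hη0 : η ≠ 0 := by
      rintro h0
      simp [h0] at hηt
    have hττ : τ (τ δ) = η ^ 2 • δ := by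
      rw [hη, ← hσ, ← AlgHom.mul_apply, ← pow_add, pow_succ, mul_two]
    have hA := h.ne_zero le_rfl
    obtain ⟨ε, hε, hsum⟩ :=
      hrad.exists_map_add_smul_eq h2 (h.map_mul_self n n.lt_succ_self) hηt hδ hττ
    have hAε : α (n + 1) + ε ≠ 0 := fun e => h.sq_ne_one h2 le_rfl <| by
      rw [eq_neg_of_add_eq_zero_left e]
      rcases hε with rfl | rfl <;> ring
    refine ih (h.mono n.le_succ) (t := t + 1) hηt ?_ ?_ ?_
    · rw [hsum]
      exact smul_ne_zero hη0 (div_ne_zero (mul_ne_zero hδ hAε) hA)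
    · rw [map_add, map_smul, hττ, smul_add, smul_smul, sq, add_comm]
    · rw [hsum]
      exact (hrad.descend t.succ_ne_zero hA (h.sq_add_one n n.lt_succ_self) hε).smul η

theorem aeval_lagrangeResolvent_ne_zero (h : IsReciprocalTower σ α n) (h2 : (2 : L) ≠ 0) {ζ : F}
    (hζ : ζ ^ 2 ^ n = 1) : aeval σ.toLinearMap (lagrangeResolvent n ζ) (α n) ≠ 0 := by
  induction n with
  | zero => simpa [lagrangeResolvent] using h.zero_ne_zero
  | succ n ih =>
    have hA := h.ne_zero le_rfl
    have hinv := h.map_succ_eq_inv n.lt_succ_self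
    have hsum : (α (n + 1))⁻¹ + α (n + 1) = 2 * α n := by
      field_simp
      linear_combination h.sq_add_one n n.lt_succ_self
    rw [aeval_lagrangeResolvent_succ, hinv]
    have hζsq : ζ ^ 2 ^ n * ζ ^ 2 ^ n = 1 := by rw [← sq, ← pow_mul, ← pow_succ, hζ]
    rcases mul_self_eq_one_iff.1 hζsq with hζn | hζn
    · rw [hζn, one_smul, hsum, two_mul, map_add, ← two_mul]
      exact mul_ne_zero h2 (ih (h.mono n.le_succ) hζn)
    · rw [hζn, neg_smul, one_smul, ← sub_eq_add_neg]
      refine (h.mono n.le_succ).aeval_lagrangeResolvent_ne_zero_of_isOddRadical h2 (t := 0)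
        (by rw [hζn, pow_zero, pow_one]) ?_ ?_ ⟨4, 1, 1, odd_one, rfl, ?_⟩
      · exact sub_ne_zero.2 fun e =>
          h.sq_ne_one h2 le_rfl (by rw [← mul_inv_cancel₀ hA, e, sq])
      · rw [map_sub, map_inv₀, hinv, inv_inv, hζn, neg_smul, one_smul, neg_sub]
      · rw [map_ofNat, zero_add, pow_one, pow_one, pow_one]
        linear_combination ((α (n + 1))⁻¹ + α (n + 1) + 2 * α n) * hsum -
          4 * mul_inv_cancel₀ hA

theorem X_pow_sub_one_dvd (h : IsReciprocalTower σ α n) (h2 : (2 : L) ≠ 0)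
    (hi : IsSquare (-1 : F)) {P : F[X]} (hP : aeval σ.toLinearMap P (α n) = 0) :
    X ^ 2 ^ n - C 1 ∣ P := by
  refine dvd_of_forall_irreducible_aeval_apply_ne_zero σ.toLinearMap ?_ ?_ hP
  · simp [← algHom_toLinearMap_pow, h.map_eq_self le_rfl]
  · intro p Q hp hirr hM
    obtain ⟨r, m, η, rfl, hη, rfl⟩ := exists_eq_X_pow_two_pow_sub_C_of_dvd hi hp hirr ⟨Q, hM⟩
    obtain rfl : expand F (2 ^ r) (lagrangeResolvent m η) = Q := mul_left_cancel₀ hp.ne_zero <| by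
      rw [X_pow_sub_C_mul_expand_lagrangeResolvent, hη, hM]
    rw [expand_aeval, ← algHom_toLinearMap_pow]
    have hshift := h.shift h2 (r.le_add_right m) (τ := σ ^ 2 ^ r) rfl
    rw [Nat.add_sub_cancel_left] at hshift
    exact hshift.aeval_lagrangeResolvent_ne_zero h2 hη

theorem linearIndependent (h : IsReciprocalTower σ α n) (h2 : (2 : L) ≠ 0)
    (hi : IsSquare (-1 : F)) :
    LinearIndependent F fun i : Fin (2 ^ n) => (σ ^ (i : ℕ)) (α n) := by
  have hdeg : ((2 ^ n : ℕ) : WithBot ℕ) ≤ (X ^ 2 ^ n - C 1 : F[X]).degree :=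
    (degree_X_pow_sub_C (by positivity) 1).ge
  simpa [← algHom_toLinearMap_pow] using
    linearIndependent_pow_apply_of_forall_dvd σ.toLinearMap hdeg fun P =>
      h.X_pow_sub_one_dvd h2 hi (P := P)

theorem two_pow_le_natDegree_minpoly (h : IsReciprocalTower σ α n) (h2 : (2 : L) ≠ 0)
    (hi : IsSquare (-1 : F)) (hα : IsIntegral F (α n)) :
    2 ^ n ≤ (minpoly F (α n)).natDegree := by
  classical
  have hinj := (h.linearIndependent h2 hi).injective
  have hroots : Finset.univ.image (fun i : Fin (2 ^ n) => (σ ^ (i : ℕ)) (α n)) ⊆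
      ((minpoly F (α n)).aroots L).toFinset := by
    intro y hy
    obtain ⟨i, -, rfl⟩ := Finset.mem_image.1 hy
    rw [Multiset.mem_toFinset, mem_aroots]
    exact ⟨minpoly.ne_zero hα, by rw [aeval_algHom_apply, minpoly.aeval, _root_.map_zero]⟩
  calc 2 ^ n = (Finset.univ.image (fun i : Fin (2 ^ n) => (σ ^ (i : ℕ)) (α n))).card := by
        rw [Finset.card_image_of_injective _ hinj, Finset.card_univ, Fintype.card_fin]
    _ ≤ ((minpoly F (α n)).aroots L).card :=
        (Finset.card_le_card hroots).trans (Multiset.toFinset_card_le _)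
    _ ≤ (minpoly F (α n)).natDegree := (card_roots' _).trans natDegree_map_le

theorem map_sub_self (h : IsReciprocalTower σ α n) {i : ℕ} (hi : i < n) :
    (σ ^ 2 ^ i) (α (i + 1) - α i) = -(α (i + 1) - α i) := by
  have hA := h.ne_zero hi
  rw [map_sub, h.map_succ_eq_inv hi, h.map_eq_self hi.le]
  field_simp
  linear_combination h.sq_add_one i hi

theorem succ (h : IsReciprocalTower σ α n) (hrel : α (n + 1) ^ 2 + 1 = 2 * α n * α (n + 1))
    (hneg : (σ ^ 2 ^ n) (α (n + 1) - α n) = -(α (n + 1) - α n)) :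
    IsReciprocalTower σ α (n + 1) where
  __ := h
  sq_add_one i hi := by
    rcases Nat.lt_succ_iff_lt_or_eq.1 hi with hi | rfl
    exacts [h.sq_add_one i hi, hrel]
  map_mul_self i hi := by
    rcases Nat.lt_succ_iff_lt_or_eq.1 hi with hi | rfl
    · exact h.map_mul_self i hi
    · rw [map_sub, h.map_eq_self le_rfl] at hneg
      linear_combination α (i + 1) * hneg - hrel

end IsReciprocalTower

theorem map_eq_neg_of_sq_eq_algebraMap {σ : L →ₐ[F] L}
    (hσ : ∀ x, σ x = x → x ∈ Set.range (algebraMap F L)) {y : F} (hy : ¬ IsSquare y) {d : L}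
    (hd : d ^ 2 = algebraMap F L y) : σ d = -d := by
  refine (sq_eq_sq_iff_eq_or_eq_neg.1 ?_).resolve_left fun hfix => hy ?_
  · rw [← map_pow, hd, AlgHom.commutes]
  · obtain ⟨r, rfl⟩ := hσ d hfix
    exact ⟨r, (algebraMap F L).injective (by rw [map_mul, ← hd, sq])⟩

-- Up to a square root of `-1` in `F`, the norm `e * τ e` is `2 * d`, which `τ` negates.
theorem map_map_eq_neg_of_sq_eq (hi : IsSquare (-1 : F)) {τ : L →ₐ[F] L} {A d e : L}
    (hA : τ A * A = 1) (hd : τ d = -d) (he : e ^ 2 = 2 * A * d) (he0 : e ≠ 0) :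
    τ (τ e) = -e := by
  obtain ⟨ι, hι⟩ := hi
  have hnorm_sq : (e * τ e) ^ 2 = (algebraMap F L ι * (2 * d)) ^ 2 := by
    calc (e * τ e) ^ 2 = e ^ 2 * τ (e ^ 2) := by rw [mul_pow, map_pow]
      _ = algebraMap F L (ι * ι) * (2 * d) ^ 2 := by
          rw [he, map_mul, map_mul, map_ofNat, hd, ← hι, map_neg, map_one]
          linear_combination -4 * d ^ 2 * hA
      _ = (algebraMap F L ι * (2 * d)) ^ 2 := by rw [map_mul]; ring
  have hneg : τ (algebraMap F L ι * (2 * d)) = -(algebraMap F L ι * (2 * d)) := by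
    rw [map_mul, map_mul, map_ofNat, hd, AlgHom.commutes, mul_neg, mul_neg]
  have hnorm : τ (e * τ e) = -(e * τ e) := by
    rcases sq_eq_sq_iff_eq_or_eq_neg.1 hnorm_sq with h | h
    · rw [h, hneg]
    · rw [h, map_neg, hneg]
  refine mul_left_cancel₀ ((map_ne_zero τ).2 he0) ?_
  rw [← map_mul, hnorm, mul_neg, mul_comm]

theorem isReciprocalTower_of_not_isSquare {σ : L →ₐ[F] L}
    (hσ : ∀ x, σ x = x → x ∈ Set.range (algebraMap F L)) (h2 : (2 : L) ≠ 0)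
    (hi : IsSquare (-1 : F)) {b : F} (hb : ¬ IsSquare (b ^ 2 - 1)) {α : ℕ → L} {n : ℕ}
    (hα0 : α 0 = algebraMap F L b)
    (hα : ∀ i < n, α (i + 1) ^ 2 + 1 = 2 * α i * α (i + 1)) : IsReciprocalTower σ α n := by
  induction n with
  | zero =>
    refine ⟨?_, ?_, by rw [hα0, AlgHom.commutes], by simp, by simp⟩
    · rw [hα0, Ne, map_eq_zero]
      rintro rfl
      exact hb (by simpa using hi)
    · rw [hα0, ← map_pow, Ne, map_eq_one_iff _ (algebraMap F L).injective]
      intro hsq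
      exact hb (by simp [hsq])
  | succ n ih =>
    have h := ih fun i hi => hα i (by omega)
    have hrel := hα n n.lt_succ_self
    have hsq : (α (n + 1) - α n) ^ 2 = α n ^ 2 - 1 := by linear_combination hrel
    refine h.succ hrel ?_
    cases n with
    | zero =>
      rw [pow_zero, pow_one]
      exact map_eq_neg_of_sq_eq_algebraMap hσ hb (by simpa [hα0] using hsq)
    | succ n =>
      rw [pow_succ, mul_two, pow_add, AlgHom.mul_apply]
      refine map_map_eq_neg_of_sq_eq hi (h.map_mul_self n n.lt_succ_self)
        (h.map_sub_self n.lt_succ_self) ?_ fun h0 => h.sq_ne_one h2 le_rfl ?_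
      · linear_combination hsq - hα n (by omega)
      · linear_combination (α (n + 1 + 1) - α (n + 1)) * h0 - hsq

end ReciprocalTower

section FixedField

variable {K L : Type*} [Field K] [Field L] [Algebra K L]

theorem mem_fixedField_zpowers {g : Gal(L/K)} {x : L} :
    x ∈ IntermediateField.fixedField (Subgroup.zpowers g) ↔ g x = x := by
  rw [IntermediateField.mem_fixedField_iff]
  refine ⟨fun h => h g (Subgroup.mem_zpowers g), fun h f hf => ?_⟩
  have hle : Subgroup.zpowers g ≤ MulAction.stabilizer Gal(L/K) x := Subgroup.zpowers_le.2 h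
  exact hle hf

namespace IsReciprocalTower

variable {g : Gal(L/K)} {α : ℕ → L} {n j : ℕ}

theorem linearIndependent_fixedField (h : IsReciprocalTower (g : L →ₐ[K] L) α n)
    (h2 : (2 : L) ≠ 0) (hi : IsSquare (-1 : K)) (hj : j ≤ n) :
    LinearIndependent (IntermediateField.fixedField (Subgroup.zpowers (g ^ 2 ^ j)))
      fun i : Fin (2 ^ (n - j)) => (g ^ (2 ^ j * (i : ℕ))) (α n) := by
  set E := IntermediateField.fixedField (Subgroup.zpowers (g ^ 2 ^ j))
  let τ : L →ₐ[E] L :=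
    { (g ^ 2 ^ j).toAlgHom.toRingHom with commutes' := fun x => mem_fixedField_zpowers.1 x.2 }
  have hτ : ⇑τ = ⇑((g : L →ₐ[K] L) ^ 2 ^ j) := by
    rw [AlgHom.coe_pow]
    exact AlgEquiv.coe_pow g (2 ^ j)
  have hiE : IsSquare (-1 : E) := by simpa using hi.map (algebraMap K E)
  have hind := (h.shift h2 hj hτ).linearIndependent h2 hiE
  have hpow (i : ℕ) : (τ ^ i) (α n) = (g ^ (2 ^ j * i)) (α n) := by
    rw [AlgHom.coe_pow, pow_mul, AlgEquiv.coe_pow]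
    rfl
  simpa only [Nat.add_sub_cancel' hj, hpow] using hind

theorem span_fixedField_eq_top [FiniteDimensional K L]
    (h : IsReciprocalTower (g : L →ₐ[K] L) α n) (h2 : (2 : L) ≠ 0) (hi : IsSquare (-1 : K))
    (hg : orderOf g = 2 ^ n) (hj : j ≤ n) :
    Submodule.span (IntermediateField.fixedField (Subgroup.zpowers (g ^ 2 ^ j)))
      (Set.range fun i : Fin (2 ^ (n - j)) => (g ^ (2 ^ j * (i : ℕ))) (α n)) = ⊤ := by
  refine (h.linearIndependent_fixedField h2 hi hj).span_eq_top_of_card_eq_finrank' ?_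
  rw [Fintype.card_fin, IntermediateField.finrank_fixedField_eq_card, Nat.card_zpowers,
    orderOf_pow_of_dvd (by positivity) (hg ▸ pow_dvd_pow 2 hj), hg, Nat.pow_div hj two_pos]

end IsReciprocalTower

end FixedField

section Rtrans

variable {K : Type} [Field K]

theorem natDegree_Rtrans (g : K[X]) : (Rtrans g).natDegree = 2 * g.natDegree := by
  rcases eq_or_ne g 0 with rfl | hg
  · simp [Rtrans]
  refine natDegree_eq_of_le_of_coeff_ne_zero (natDegree_sum_le_of_forall_le _ _ fun i hi => ?_) ?_
  · have hi' := Finset.mem_range.1 hi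
    compute_degree
    omega
  · rw [Rtrans, finsetSum_coeff, Finset.sum_range_succ, Finset.sum_eq_zero, zero_add, Nat.sub_self,
      pow_zero, mul_one, coeff_C_mul, mul_comm 2, coeff_pow_of_natDegree_le (by compute_degree)]
    · simpa [coeff_one] using hg
    · intro i hi
      have hi' := Finset.mem_range.1 hi
      refine coeff_eq_zero_of_natDegree_lt (lt_of_le_of_lt (b := i * 2 + (g.natDegree - i)) ?_ ?_)
      · compute_degree
      · omega

theorem eval_zero_Rtrans (g : K[X]) : (Rtrans g).eval 0 = g.leadingCoeff := by
  simp only [Rtrans, eval_finsetSum, eval_mul, eval_pow, eval_add, eval_C, eval_X, eval_one,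
    eval_ofNat]
  rw [Finset.sum_range_succ, Finset.sum_eq_zero]
  · simp
  · intro i hi
    simp [Nat.sub_ne_zero_of_lt (Finset.mem_range.1 hi)]

theorem Rtrans_ne_zero {g : K[X]} (hg : g ≠ 0) : Rtrans g ≠ 0 := fun h =>
  leadingCoeff_ne_zero.2 hg (by rw [← eval_zero_Rtrans, h, eval_zero])

theorem iterate_Rtrans_ne_zero {g : K[X]} (hg : g ≠ 0) (k : ℕ) : Rtrans^[k] g ≠ 0 :=
  Function.Iterate.rec (· ≠ 0) hg (fun _ => Rtrans_ne_zero) k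

theorem natDegree_iterate_Rtrans (g : K[X]) (k : ℕ) :
    (Rtrans^[k] g).natDegree = 2 ^ k * g.natDegree := by
  induction k with
  | zero => simp
  | succ k ih => rw [Function.iterate_succ_apply', natDegree_Rtrans, ih, pow_succ', mul_assoc]

theorem Rtrans_X_sub_C (b : K) : Rtrans (X - C b) = X ^ 2 - C (2 * b) * X + 1 := by
  simp only [Rtrans, natDegree_X_sub_C, Finset.sum_range_succ, Finset.sum_range_zero, coeff_sub,
    coeff_X_zero, coeff_X_one, coeff_C_zero, coeff_C_succ]
  simp only [zero_sub, sub_zero, map_neg, map_one, map_mul, map_ofNat]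
  ring

theorem not_isSquare_of_irreducible_Rtrans_X_sub_C {b : K} (hirr : Irreducible (Rtrans (X - C b))) :
    ¬ IsSquare (b ^ 2 - 1) := by
  rintro ⟨d, hd⟩
  have hroot : IsRoot (Rtrans (X - C b)) (b + d) := by
    simp only [Rtrans_X_sub_C, IsRoot.def, eval_add, eval_sub, eval_pow, eval_X, eval_mul, eval_C,
      eval_one]
    linear_combination -hd
  have hdeg := natDegree_eq_of_degree_eq_some (degree_eq_one_of_irreducible_of_root hirr hroot)
  rw [natDegree_Rtrans, natDegree_X_sub_C] at hdeg
  norm_num at hdeg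

section Roots

variable {L : Type*} [Field L] [Algebra K L]

theorem aeval_Rtrans (g : K[X]) {x : L} (hx : 2 * x ≠ 0) :
    aeval x (Rtrans g) = (2 * x) ^ g.natDegree * aeval ((x ^ 2 + 1) / (2 * x)) g := by
  rw [Rtrans, map_sum, aeval_eq_sum_range, Finset.mul_sum]
  refine Finset.sum_congr rfl fun i hi => ?_
  obtain ⟨d, hd⟩ := Nat.exists_eq_add_of_le (Finset.mem_range_succ_iff.1 hi)
  simp only [map_mul, map_pow, map_add, map_one, aeval_X, aeval_C, map_ofNat, Algebra.smul_def]
  rw [hd, Nat.add_sub_cancel_left, pow_add, div_pow]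
  generalize 2 * x = y at hx
  field_simp

theorem ne_zero_of_aeval_Rtrans_eq_zero {g : K[X]} (hg : g ≠ 0) {x : L}
    (hx : aeval x (Rtrans g) = 0) : x ≠ 0 := by
  rintro rfl
  rw [← map_zero (algebraMap K L), aeval_algebraMap_apply, map_zero (algebraMap K L), map_eq_zero,
    coe_aeval_eq_eval, eval_zero_Rtrans, leadingCoeff_eq_zero] at hx
  exact hg hx

theorem exists_tower_of_aeval_iterate_Rtrans_eq_zero (h2 : (2 : L) ≠ 0) {g : K[X]} (hg : g ≠ 0)
    {k : ℕ} {x : L} (hx : aeval x (Rtrans^[k] g) = 0) :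
    ∃ α : ℕ → L, α k = x ∧ aeval (α 0) g = 0 ∧
      ∀ i < k, α (i + 1) ^ 2 + 1 = 2 * α i * α (i + 1) := by
  induction k generalizing x with
  | zero => exact ⟨fun _ => x, rfl, hx, by simp⟩
  | succ k ih =>
    rw [Function.iterate_succ_apply'] at hx
    have hx0 := ne_zero_of_aeval_Rtrans_eq_zero (iterate_Rtrans_ne_zero hg k) hx
    have h2x : 2 * x ≠ 0 := mul_ne_zero h2 hx0
    rw [aeval_Rtrans _ h2x] at hx
    obtain ⟨α, hαk, hα0, hα⟩ := ih ((mul_eq_zero.1 hx).resolve_left (pow_ne_zero _ h2x))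
    refine ⟨Function.update α (k + 1) x, by simp, by simpa using hα0, fun i hi => ?_⟩
    rw [Function.update_of_ne hi.ne]
    rcases Nat.lt_succ_iff_lt_or_eq.1 hi with hi | rfl
    · rw [Function.update_of_ne (by omega)]
      exact hα i hi
    · rw [Function.update_self, hαk]
      field_simp

end Roots

end Rtrans

section FiniteField

variable {K L : Type*} [Field K] [Fintype K] [Field L] [Algebra K L]

variable (K L) in
theorem two_ne_zero_of_odd_card (hK : Odd (Fintype.card K)) : (2 : L) ≠ 0 := by
  have h2 : (2 : K) ≠ 0 := Ring.two_ne_zero fun h =>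
    Nat.not_even_iff_odd.2 hK (Nat.even_iff.2 (FiniteField.even_card_iff_char_two.1 h))
  simpa only [map_ofNat] using (map_ne_zero (algebraMap K L)).2 h2

theorem mem_range_algebraMap_of_pow_card_eq_self {x : L} (hx : x ^ Fintype.card K = x) :
    x ∈ Set.range (algebraMap K L) := by
  have hsplits : (X ^ Fintype.card K - X : K[X]).Splits := by
    rw [splits_iff_card_roots, FiniteField.roots_X_pow_card_sub_X,
      FiniteField.X_pow_card_sub_X_natDegree_eq K Fintype.one_lt_card]
    rfl
  exact hsplits.mem_range_of_isRoot (FiniteField.X_pow_card_sub_X_ne_zero K Fintype.one_lt_card)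
    (i := algebraMap K L) (by simp [hx])

theorem frobeniusAlgEquivOfAlgebraic_pow_apply [Algebra.IsAlgebraic K L] (m : ℕ) (x : L) :
    (FiniteField.frobeniusAlgEquivOfAlgebraic K L ^ m) x = x ^ Fintype.card K ^ m := by
  rw [AlgEquiv.coe_pow, FiniteField.coe_frobeniusAlgEquivOfAlgebraic_iterate]

theorem mem_fixedField_zpowers_frobenius_pow [Algebra.IsAlgebraic K L] {m : ℕ} {x : L} :
    x ∈ IntermediateField.fixedField
        (Subgroup.zpowers (FiniteField.frobeniusAlgEquivOfAlgebraic K L ^ m)) ↔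
      x ^ Fintype.card K ^ m = x := by
  rw [mem_fixedField_zpowers, frobeniusAlgEquivOfAlgebraic_pow_apply]

namespace IsReciprocalTower

variable {α : ℕ → L} {n j : ℕ}

theorem eq_zero_of_sum_mul_pow_eq_zero [Algebra.IsAlgebraic K L]
    (h : IsReciprocalTower (FiniteField.frobeniusAlgHom K L) α n) (h2 : (2 : L) ≠ 0)
    (hi : IsSquare (-1 : K)) (hj : j ≤ n) {c : Fin (2 ^ (n - j)) → L}
    (hc : ∀ i, c i ^ Fintype.card K ^ 2 ^ j = c i)
    (hsum : ∑ i, c i * α n ^ Fintype.card K ^ (2 ^ j * (i : ℕ)) = 0) (i : Fin (2 ^ (n - j))) :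
    c i = 0 := by
  have hind := linearIndependent_fixedField (g := FiniteField.frobeniusAlgEquivOfAlgebraic K L)
    h h2 hi hj
  simp only [frobeniusAlgEquivOfAlgebraic_pow_apply] at hind
  have hzero := Fintype.linearIndependent_iff.1 hind
    (fun i => ⟨c i, mem_fixedField_zpowers_frobenius_pow.2 (hc i)⟩) hsum i
  exact congrArg Subtype.val hzero

theorem exists_eq_sum_mul_pow [FiniteDimensional K L]
    (h : IsReciprocalTower (FiniteField.frobeniusAlgHom K L) α n) (h2 : (2 : L) ≠ 0)
    (hi : IsSquare (-1 : K)) (hL : finrank K L = 2 ^ n) (hj : j ≤ n) (x : L) :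
    ∃ c : Fin (2 ^ (n - j)) → L, (∀ i, c i ^ Fintype.card K ^ 2 ^ j = c i) ∧
      x = ∑ i, c i * α n ^ Fintype.card K ^ (2 ^ j * (i : ℕ)) := by
  have : Finite L := Module.finite_of_finite K
  have hspan := span_fixedField_eq_top (g := FiniteField.frobeniusAlgEquivOfAlgebraic K L)
    h h2 hi ((FiniteField.orderOf_frobeniusAlgEquivOfAlgebraic K L).trans hL) hj
  simp only [frobeniusAlgEquivOfAlgebraic_pow_apply] at hspan
  obtain ⟨c, hc⟩ :=
    (Submodule.mem_span_range_iff_exists_fun _).1 (hspan.ge (Submodule.mem_top (x := x)))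
  exact ⟨fun i => c i, fun i => mem_fixedField_zpowers_frobenius_pow.1 (c i).2, hc.symm⟩

end IsReciprocalTower

end FiniteField

section Iterates

variable {K : Type} [Field K] [Fintype K]

theorem exists_isReciprocalTower_of_aeval_iterate_Rtrans_eq_zero (h4 : Fintype.card K % 4 = 1)
    {b : K} (hb : ¬ IsSquare (b ^ 2 - 1)) {L : Type*} [Field L] [Algebra K L] {k : ℕ} {x : L}
    (hx : aeval x (Rtrans^[k] (X - C b)) = 0) :
    ∃ α : ℕ → L, α k = x ∧ IsReciprocalTower (FiniteField.frobeniusAlgHom K L) α k := by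
  have h2 : (2 : L) ≠ 0 := two_ne_zero_of_odd_card K L (Nat.odd_iff.2 (by omega))
  obtain ⟨α, hαk, hα0, hα⟩ :=
    exists_tower_of_aeval_iterate_Rtrans_eq_zero h2 (X_sub_C_ne_zero b) hx
  refine ⟨α, hαk, isReciprocalTower_of_not_isSquare
    (fun _ => mem_range_algebraMap_of_pow_card_eq_self) h2
    (FiniteField.isSquare_neg_one_iff.2 (by omega)) hb ?_ hα⟩
  simpa [sub_eq_zero] using hα0

theorem irreducible_iterate_Rtrans (h4 : Fintype.card K % 4 = 1) {b : K}
    (hb : ¬ IsSquare (b ^ 2 - 1)) (k : ℕ) : Irreducible (Rtrans^[k] (X - C b)) := by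
  set G := Rtrans^[k] (X - C b)
  have hdeg : G.natDegree = 2 ^ k := by
    rw [natDegree_iterate_Rtrans, natDegree_X_sub_C, mul_one]
  have hG0 : G ≠ 0 := iterate_Rtrans_ne_zero (X_sub_C_ne_zero b) k
  obtain ⟨x, hx⟩ := IsAlgClosed.exists_aeval_eq_zero (AlgebraicClosure K) G <| by
    rw [degree_eq_natDegree hG0, hdeg]
    exact_mod_cast (Nat.two_pow_pos k).ne'
  obtain ⟨α, rfl, hα⟩ := exists_isReciprocalTower_of_aeval_iterate_Rtrans_eq_zero h4 hb hx
  have hint : IsIntegral K (α k) := Algebra.IsIntegral.isIntegral _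
  have hle : G.natDegree ≤ (minpoly K (α k)).natDegree := hdeg.trans_le <|
    hα.two_pow_le_natDegree_minpoly (two_ne_zero_of_odd_card K _ (Nat.odd_iff.2 (by omega)))
      (FiniteField.isSquare_neg_one_iff.2 (by omega)) hint
  exact (associated_of_dvd_of_natDegree_le (minpoly.dvd K _ hx) hG0 hle).irreducible
    (minpoly.irreducible hint)

end Iterates

/-- Chapman's theorem: for `q ≡ 1 (mod 4)` and `g₁ = x² + ax + 1` irreducible over `F_q`,
the iterates `g_{k+1} = g_k^R` are irreducible of degree `2^k`, and every root of `g_k` is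
completely normal over `F_q`: for each divisor `m` of `2^k`, the conjugates
`α^{q^{m i}}` form a basis of `F_{q^{2^k}}` over the subfield `F_{q^m}` (the fixed field
of `x ↦ x^{q^m}`). -/
theorem stmt_13 (K : Type) [Field K] [Fintype K] (q : ℕ)
    (hq : Fintype.card K = q) (h4 : q % 4 = 1)
    (a : K) (hirr : Irreducible ((X : Polynomial K) ^ 2 + C a * X + 1))
    (G : ℕ → Polynomial K) (hG1 : G 1 = (X : Polynomial K) ^ 2 + C a * X + 1)
    (hGrec : ∀ k, 1 ≤ k → G (k + 1) = Rtrans (G k)) :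
    ∀ k, 1 ≤ k → Irreducible (G k) ∧ (G k).natDegree = 2 ^ k ∧
      ∀ (L : Type) [Field L] [Algebra K L], Module.finrank K L = 2 ^ k →
        ∀ α : L, aeval α (G k) = 0 →
          ∀ m : ℕ, m ∣ 2 ^ k →
            (∀ co : Fin (2 ^ k / m) → L, (∀ i, co i ^ q ^ m = co i) →
              ∑ i, co i * α ^ q ^ (m * (i : ℕ)) = 0 → ∀ i, co i = 0) ∧
            (∀ x : L, ∃ co : Fin (2 ^ k / m) → L, (∀ i, co i ^ q ^ m = co i) ∧
              x = ∑ i, co i * α ^ q ^ (m * (i : ℕ))) := by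
  subst hq
  have hodd : Odd (Fintype.card K) := Nat.odd_iff.2 (by omega)
  obtain ⟨b, rfl⟩ : ∃ b : K, a = -(2 * b) :=
    ⟨-a / 2, by field_simp [two_ne_zero_of_odd_card K K hodd]⟩
  have hquad : (X : K[X]) ^ 2 + C (-(2 * b)) * X + 1 = Rtrans (X - C b) := by
    rw [Rtrans_X_sub_C, map_neg, neg_mul, ← sub_eq_add_neg]
  rw [hquad] at hirr hG1
  have hb := not_isSquare_of_irreducible_Rtrans_X_sub_C hirr
  have hG : ∀ k, 1 ≤ k → G k = Rtrans^[k] (X - C b) := fun k hk => by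
    induction k, hk using Nat.le_induction with
    | base => exact hG1
    | succ k hk ih => rw [hGrec k hk, ih, Function.iterate_succ_apply']
  intro k hk
  rw [hG k hk]
  refine ⟨irreducible_iterate_Rtrans h4 hb k, ?_, fun L _ _ hL α hα m hm => ?_⟩
  · rw [natDegree_iterate_Rtrans, natDegree_X_sub_C, mul_one]
  obtain ⟨α, rfl, htower⟩ := exists_isReciprocalTower_of_aeval_iterate_Rtrans_eq_zero h4 hb hα
  obtain ⟨j, hj, rfl⟩ := (Nat.dvd_prime_pow Nat.prime_two).1 hm
  have : FiniteDimensional K L := .of_finrank_pos (hL ▸ Nat.two_pow_pos k)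
  have h2 := two_ne_zero_of_odd_card K L hodd
  have hi : IsSquare (-1 : K) := FiniteField.isSquare_neg_one_iff.2 (by omega)
  rw [Nat.pow_div hj two_pos]
  exact ⟨fun c hc hsum => htower.eq_zero_of_sum_mul_pow_eq_zero h2 hi hj hc hsum,
    htower.exists_eq_sum_mul_pow h2 hi hL hj⟩
end

section
/- Let g(x) = x - A ∈ F_q[x] with A ≠ a/c, t ≥ 2 an integer all of whose prime factors divide q - 1, and σ = [[a,b],[c,d]] ∈ GL_2(F_q) with cd ≠ 0 and ab = 0. Assume that for every prime ℓ | t, the element η(g;σ) = (-d/c)·g(b/d)·g(a/c)^{-1} is not an ℓ-th power in F_q, and if q ≡ 3 (mod 4) assume t is odd. Define g_0 = g and g_k = g_{k-1}^{R_{σ,t}} for k ≥ 1, where g^{R_{σ,t}} = P_{σ^{-1}}(S_t(P_σ(g))) and S_t(f)(x) = f(x^t). Then for every k ≥ 0, g_k is irreducible of degree t^k and every root of g_k is completely normal over F_q. -/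
open Polynomial Module

/-- `S_t(f)(x) = f(x^t)`. -/
noncomputable def St {K : Type} [Field K] (t : ℕ) (f : Polynomial K) : Polynomial K :=
  f.comp (X ^ t)

/-- The `R_{σ,t}`-transform `g ↦ P_{σ⁻¹}(S_t(P_σ(g)))`, with
`σ⁻¹ = (ad - bc)⁻¹ [[d,-b],[-c,a]]`. -/
noncomputable def Rsigma {K : Type} [Field K] (a b c d : K) (t : ℕ)
    (g : Polynomial K) : Polynomial K :=
  Pmat (d / (a * d - b * c)) (-b / (a * d - b * c)) (-c / (a * d - b * c))
    (a / (a * d - b * c)) (St t (Pmat a b c d g))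

/-!
The transforms telescope: `g_k = P_{σ⁻¹}(S_{t^k}(P_σ g))`, and `P_σ g` is a multiple of `x - η`.
With `n = t ^ k`, irreducibility of `g_k` is therefore that of `x ^ n - η`, and as `a b = 0` every
root of `g_k` is `u / (1 - γ)` with `u` and `θ = γ ^ n` in the base field, hence proportional to
`∑_{i < n} γ ^ i`. Frobenius permutes the lines spanned by the `γ ^ i`, and each `γ ^ i` is
annihilated by an irreducible binomial `x ^ s - κ` in Frobenius. Projections onto spans of the
`γ ^ i` with the same annihilator commute with Frobenius, so a polynomial in Frobenius that kills
the sum kills every `γ ^ i`: the root is normal. The argument applies unchanged over each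
intermediate field, since `γ ^ r` generates the one over which `γ` has degree `r`.
-/

/-- The arithmetic condition on `n` under which, over a field with `q` elements, `X ^ n - a` is
irreducible as soon as `a` has no `p`-th root for the primes `p ∣ n`; it also makes the
lifting-the-exponent formula for `q ^ s - 1` valid at all primes dividing `n`. -/
structure KummerDegree (q n : ℕ) : Prop where
  ne_zero : n ≠ 0
  dvd_sub_one : ∀ p : ℕ, p.Prime → p ∣ n → p ∣ q - 1
  four_dvd_sub_one : 2 ∣ n → 4 ∣ q - 1

namespace KummerDegree

variable {q n m : ℕ}

theorem of_dvd (h : KummerDegree q n) (hm : m ∣ n) : KummerDegree q m where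
  ne_zero := ne_zero_of_dvd_ne_zero h.ne_zero hm
  dvd_sub_one p hp hpm := h.dvd_sub_one p hp (hpm.trans hm)
  four_dvd_sub_one h2 := h.four_dvd_sub_one (h2.trans hm)

theorem pow_left (h : KummerDegree q n) (m : ℕ) : KummerDegree (q ^ m) n where
  ne_zero := h.ne_zero
  dvd_sub_one p hp hpn := (h.dvd_sub_one p hp hpn).trans (q.sub_one_dvd_pow_sub_one m)
  four_dvd_sub_one h2 := (h.four_dvd_sub_one h2).trans (q.sub_one_dvd_pow_sub_one m)

theorem pow_right (h : KummerDegree q n) (k : ℕ) : KummerDegree q (n ^ k) where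
  ne_zero := pow_ne_zero k h.ne_zero
  dvd_sub_one p hp hpn := h.dvd_sub_one p hp (hp.dvd_of_dvd_pow hpn)
  four_dvd_sub_one h2 := h.four_dvd_sub_one (Nat.prime_two.dvd_of_dvd_pow h2)

theorem of_odd_of_mod_four_eq_three (hn : n ≠ 0) (h : ∀ p : ℕ, p.Prime → p ∣ n → p ∣ q - 1)
    (hodd : q % 4 = 3 → Odd n) : KummerDegree q n where
  ne_zero := hn
  dvd_sub_one := h
  four_dvd_sub_one h2 := by
    have h2q : 2 ∣ q - 1 := h 2 Nat.prime_two h2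
    have hq : q % 4 ≠ 3 := fun hq => Nat.not_even_iff_odd.2 (hodd hq) (even_iff_two_dvd.2 h2)
    omega

end KummerDegree

theorem padicValNat_pow_sub_one {p q s : ℕ} [hp : Fact p.Prime] (hq : 1 < q) (hpq : p ∣ q - 1)
    (h2 : p = 2 → 4 ∣ q - 1) (hs : s ≠ 0) :
    padicValNat p (q ^ s - 1) = padicValNat p (q - 1) + padicValNat p s := by
  have hndvd : ¬ p ∣ q := fun h => hp.out.not_dvd_one (by
    simpa [Nat.sub_sub_self hq.le] using Nat.dvd_sub h hpq)
  rcases hp.out.eq_two_or_odd' with rfl | hodd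
  · have h4 : (4 : ℤ) ∣ (q : ℤ) - 1 := by have := h2 rfl; omega
    have hlte := Int.two_pow_sub_pow' (x := q) (y := 1) s h4 (by omega)
    have hpow : q ^ s - 1 ≠ 0 := Nat.sub_ne_zero_of_lt (Nat.one_lt_pow hs hq)
    rw [← Nat.cast_inj (R := ℕ∞), Nat.cast_add, padicValNat_eq_emultiplicity hpow,
      padicValNat_eq_emultiplicity (by omega), padicValNat_eq_emultiplicity hs]
    simpa [← Int.natCast_emultiplicity, Nat.cast_sub hq.le,
      Nat.cast_sub (Nat.one_le_pow s q (by omega))] using hlte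
  · simpa using padicValNat.pow_sub_pow hodd hq hpq hndvd hs

theorem padicValNat_div_gcd {p m n : ℕ} [Fact p.Prime] (hm : m ≠ 0) (hn : n ≠ 0) :
    padicValNat p (m / m.gcd n) = padicValNat p m - padicValNat p n := by
  have hgcd : padicValNat p (m.gcd n) = min (padicValNat p m) (padicValNat p n) := by
    simp only [← Nat.factorization_def _ Fact.out, Nat.factorization_gcd hm hn, Finsupp.inf_apply]
  rw [padicValNat.div_of_dvd (Nat.gcd_dvd_left m n), hgcd]
  omega

theorem KummerDegree.padicValNat_pow_div_gcd_sub_one {p q e : ℕ} [hp : Fact p.Prime] (hq : 1 < q)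
    (he : KummerDegree q e) (hpe : p ∣ e) :
    padicValNat p (q ^ (e / e.gcd (q - 1)) - 1) =
      max (padicValNat p e) (padicValNat p (q - 1)) := by
  have hs : e / e.gcd (q - 1) ≠ 0 :=
    (Nat.div_gcd_pos_of_pos_left _ (Nat.pos_of_ne_zero he.ne_zero)).ne'
  rw [padicValNat_pow_sub_one hq (he.dvd_sub_one p hp.out hpe)
    (fun h => he.four_dvd_sub_one (h ▸ hpe)) hs, padicValNat_div_gcd he.ne_zero (by omega)]
  omega

-- The witness is `s = e / gcd(e, q - 1)`, the multiplicative order of `q` modulo `e`.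
theorem KummerDegree.exists_pow_sub_one_eq_mul {q e : ℕ} (hq : 1 < q) (he : KummerDegree q e) :
    ∃ s w : ℕ, s ∣ e ∧ q ^ s - 1 = e * w ∧ s.Coprime w := by
  set s := e / e.gcd (q - 1) with hs
  have hse : s ∣ e := Nat.div_dvd_of_dvd (Nat.gcd_dvd_left _ _)
  have hs0 : s ≠ 0 := ne_zero_of_dvd_ne_zero he.ne_zero hse
  have hpow : q ^ s - 1 ≠ 0 := Nat.sub_ne_zero_of_lt (Nat.one_lt_pow hs0 hq)
  have hdvd : e ∣ q ^ s - 1 := by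
    refine (Nat.factorization_prime_le_iff_dvd he.ne_zero hpow).1 fun p hp => ?_
    have := Fact.mk hp
    rw [Nat.factorization_def _ hp, Nat.factorization_def _ hp]
    by_cases hpe : p ∣ e
    · exact (le_max_left _ _).trans_eq (he.padicValNat_pow_div_gcd_sub_one hq hpe).symm
    · simp [padicValNat.eq_zero_of_not_dvd hpe]
  obtain ⟨w, hw⟩ := hdvd
  have hw0 : w ≠ 0 := right_ne_zero_of_mul (hw ▸ hpow)
  refine ⟨s, w, hse, hw, Nat.coprime_of_dvd fun p hp hps hpw => ?_⟩
  have := Fact.mk hp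
  have hval := he.padicValNat_pow_div_gcd_sub_one hq (hps.trans hse)
  have hvals : 1 ≤ padicValNat p s := one_le_padicValNat_of_dvd hs0 hps
  have hvalw : 1 ≤ padicValNat p w := one_le_padicValNat_of_dvd hw0 hpw
  rw [← hs, hw, padicValNat.mul he.ne_zero hw0] at hval
  rw [hs, padicValNat_div_gcd he.ne_zero (by omega)] at hvals
  omega

/-- `a` has no `p`-th root in `M` for any prime `p` dividing `n`. -/
def HasNoPrimeRoots {M : Type*} [Monoid M] (n : ℕ) (a : M) : Prop :=
  ∀ p : ℕ, p.Prime → p ∣ n → ∀ b : M, b ^ p ≠ a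

namespace HasNoPrimeRoots

theorem of_dvd {M : Type*} [Monoid M] {n m : ℕ} {a : M} (h : HasNoPrimeRoots n a) (hm : m ∣ n) :
    HasNoPrimeRoots m a :=
  fun p hp hpm => h p hp (hpm.trans hm)

theorem pow_right {M : Type*} [Monoid M] {n : ℕ} {a : M} (h : HasNoPrimeRoots n a) (k : ℕ) :
    HasNoPrimeRoots (n ^ k) a :=
  fun p hp hpn => h p hp (hp.dvd_of_dvd_pow hpn)

variable {K : Type*} [Field K] {n : ℕ} {a : K}

theorem ne_pow (h : HasNoPrimeRoots n a) (hn : n ≠ 1) (b : K) : b ^ n ≠ a := by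
  obtain ⟨p, hp, r, rfl⟩ := Nat.exists_prime_and_dvd hn
  rw [mul_comm, pow_mul]
  exact h p hp (dvd_mul_right p r) _

theorem ne_zero (h : HasNoPrimeRoots n a) (hn : n ≠ 1) : a ≠ 0 := by
  obtain ⟨p, hp, hpn⟩ := Nat.exists_prime_and_dvd hn
  exact fun ha => h p hp hpn 0 (by rw [ha, zero_pow hp.ne_zero])

theorem pow_of_coprime (h : HasNoPrimeRoots n a) {k : ℕ} (hk : n.Coprime k) :
    HasNoPrimeRoots n (a ^ k) := by
  intro p hp hpn b hb
  obtain ⟨c, hc⟩ := (pow_mem_range_pow_of_coprime (hk.coprime_dvd_left hpn).symm a).1 ⟨b, hb⟩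
  exact h p hp hpn c hc

theorem inv (h : HasNoPrimeRoots n a) : HasNoPrimeRoots n a⁻¹ :=
  fun p hp hpn b hb => h p hp hpn b⁻¹ (by rw [inv_pow, hb, inv_inv])

theorem pow_mul (h : HasNoPrimeRoots n a) {c : K} (hc : c ≠ 0) :
    HasNoPrimeRoots n (c ^ n * a) := by
  rintro p hp ⟨r, rfl⟩ b hb
  refine h p hp (dvd_mul_right p r) (b / c ^ r) ?_
  rw [div_pow, hb, ← _root_.pow_mul, mul_comm r, mul_div_cancel_left₀ _ (pow_ne_zero _ hc)]

end HasNoPrimeRoots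

open IntermediateField in
-- The norm of the generator is `(-1) ^ (m + 1) * a`, so a `p`-th root of it gives one of `a`.
theorem HasNoPrimeRoots.adjoinSimple_gen {K E : Type*} [Field K] [Field E] [Algebra K E] {x : E}
    {m n : ℕ} {a : K} (hm : m ≠ 0) (hx : minpoly K x = X ^ m - C a)
    (hneg : ∀ p : ℕ, p.Prime → p ∣ n → ∃ ε : K, ε ^ p = -1) (ha : HasNoPrimeRoots n a) :
    HasNoPrimeRoots n (AdjoinSimple.gen K x) := by
  intro p hp hpn y hy
  obtain ⟨ε, hε⟩ := hneg p hp hpn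
  have hint : IsIntegral K x :=
    minpoly.ne_zero_iff.1 (hx ▸ X_pow_sub_C_ne_zero (Nat.pos_of_ne_zero hm) a)
  have hnorm : Algebra.norm K (AdjoinSimple.gen K x) = (-1) ^ (m + 1) * a := by
    rw [← adjoin.powerBasis_gen hint, Algebra.PowerBasis.norm_gen_eq_coeff_zero_minpoly]
    simp only [adjoin.powerBasis_gen, minpoly_gen, hx, adjoin.powerBasis_dim,
      natDegree_X_pow_sub_C, coeff_sub, coeff_X_pow, coeff_C_zero, hm.symm, if_false]
    ring
  refine ha p hp hpn (ε ^ (m + 1) * Algebra.norm K y) ?_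
  calc (ε ^ (m + 1) * Algebra.norm K y) ^ p
      = (ε ^ p) ^ (m + 1) * Algebra.norm K (y ^ p) := by rw [map_pow]; ring
    _ = ((-1) * (-1)) ^ (m + 1) * a := by rw [hε, hy, hnorm, mul_pow, mul_assoc]
    _ = a := by simp

theorem X_pow_sub_C_irreducible_of_hasNoPrimeRoots.{u} {K : Type u} [Field K] {n : ℕ} (hn : n ≠ 0)
    {a : K} (hneg : ∀ p : ℕ, p.Prime → p ∣ n → ∃ ε : K, ε ^ p = -1) (ha : HasNoPrimeRoots n a) :
    Irreducible (X ^ n - C a) := by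
  induction n using induction_on_primes generalizing K a with
  | zero => exact absurd rfl hn
  | one => simpa using irreducible_X_sub_C a
  | prime_mul p n hp ih =>
    have hnp : n ∣ p * n := dvd_mul_left n p
    rw [mul_comm]
    refine X_pow_mul_sub_C_irreducible
      (X_pow_sub_C_irreducible_of_prime hp (ha p hp (dvd_mul_right p n))) fun E _ _ x hx => ?_
    refine ih (right_ne_zero_of_mul hn) (fun ℓ hℓ hℓn => ?_) ((ha.of_dvd hnp).adjoinSimple_gen
      hp.ne_zero hx fun ℓ hℓ hℓn => hneg ℓ hℓ (hℓn.trans hnp))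
    obtain ⟨ε, hε⟩ := hneg ℓ hℓ (hℓn.trans hnp)
    exact ⟨algebraMap K _ ε, by rw [← map_pow, hε, map_neg, map_one]⟩

section FiniteField

variable {F : Type*} [Field F] [Fintype F]

theorem KummerDegree.exists_pow_eq_neg_one {n : ℕ} (hn : KummerDegree (Fintype.card F) n)
    (p : ℕ) (hp : p.Prime) (hpn : p ∣ n) : ∃ ε : F, ε ^ p = -1 := by
  rcases hp.eq_two_or_odd' with rfl | hodd
  · have hcard : Fintype.card F % 4 ≠ 3 := by have := hn.four_dvd_sub_one hpn; omega
    obtain ⟨ε, hε⟩ := FiniteField.isSquare_neg_one_iff.2 hcard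
    exact ⟨ε, by rw [sq, hε]⟩
  · exact ⟨-1, hodd.neg_one_pow⟩

theorem KummerDegree.X_pow_sub_C_irreducible {n : ℕ} (hn : KummerDegree (Fintype.card F) n) {a : F}
    (ha : HasNoPrimeRoots n a) : Irreducible (X ^ n - C a) :=
  X_pow_sub_C_irreducible_of_hasNoPrimeRoots hn.ne_zero hn.exists_pow_eq_neg_one ha

theorem KummerDegree.minpoly_eq_X_pow_sub_C {n : ℕ} (hn : KummerDegree (Fintype.card F) n)
    {L : Type*} [Field L] [Algebra F L] {a : F} (ha : HasNoPrimeRoots n a) {x : L}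
    (hx : x ^ n = algebraMap F L a) : minpoly F x = X ^ n - C a :=
  (minpoly.eq_of_irreducible_of_monic (hn.X_pow_sub_C_irreducible ha) (by simp [hx])
    (monic_X_pow_sub_C a hn.ne_zero)).symm

end FiniteField

section Monomial

variable {F V : Type*} [Field F] [AddCommGroup V] [Module F V]

theorem dvd_of_aeval_apply_eq_zero {T : Module.End F V} {f P : F[X]}
    (hf : Irreducible f) {v : V} (hv : v ≠ 0) (hfv : aeval T f v = 0) (hPv : aeval T P v = 0) :
    f ∣ P := by
  by_contra hfP
  obtain ⟨g, h, hgh⟩ := hf.coprime_iff_not_dvd.2 hfP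
  refine hv ?_
  calc v = aeval T (g * f + h * P) v := by rw [hgh]; simp
    _ = 0 := by simp [hfv, hPv]

theorem commute_aeval_left {R A : Type*} [CommSemiring R] [Semiring A] [Algebra R A] {x y : A}
    (h : Commute x y) (P : R[X]) : Commute (aeval x P) y := by
  induction P using Polynomial.induction_on' with
  | add f g hf hg => simpa only [map_add] using hf.add_left hg
  | monomial k c =>
    simpa only [aeval_monomial] using Commute.mul_left (Algebra.commutes c y) (h.pow_left k)

/-- The coordinate projection onto the span of the basis vectors annihilated by `f(T)`; it
commutes with `T` when `T` permutes the lines spanned by the basis vectors. -/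
noncomputable def annihilatedProj {ι : Type*} (B : Basis ι F V) (T : Module.End F V) (f : F[X]) :
    Module.End F V :=
  open Classical in B.constr F fun i => if aeval T f (B i) = 0 then B i else 0

section

variable {ι : Type*} {B : Basis ι F V} {T : Module.End F V} {f : F[X]}

theorem annihilatedProj_apply_of_eq_zero {i : ι} (h : aeval T f (B i) = 0) :
    annihilatedProj B T f (B i) = B i := by
  simp [annihilatedProj, h]

theorem annihilatedProj_apply_of_ne_zero {i : ι} (h : aeval T f (B i) ≠ 0) :
    annihilatedProj B T f (B i) = 0 := by
  simp [annihilatedProj, h]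

theorem aeval_mul_annihilatedProj : aeval T f * annihilatedProj B T f = 0 := by
  refine B.ext fun i => ?_
  by_cases h : aeval T f (B i) = 0
  · simp [annihilatedProj_apply_of_eq_zero h, h]
  · simp [annihilatedProj_apply_of_ne_zero h]

theorem commute_annihilatedProj (hT : Function.Injective T)
    (hmono : ∀ i, ∃ j, ∃ c : F, T (B i) = c • B j) : Commute T (annihilatedProj B T f) := by
  refine B.ext fun i => ?_
  obtain ⟨j, c, hij⟩ := hmono i
  have hc : c ≠ 0 := by
    rintro rfl
    exact B.ne_zero i (hT (by simpa using hij))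
  have hiff : aeval T f (B j) = 0 ↔ aeval T f (B i) = 0 := by
    have hcomm : T (aeval T f (B i)) = c • aeval T f (B j) := by
      rw [← map_smul, ← hij]
      exact LinearMap.congr_fun (commute_aeval_left (Commute.refl T) f).eq.symm (B i)
    rw [← map_eq_zero_iff T hT (x := aeval T f (B i)), hcomm, smul_eq_zero, or_iff_right hc]
  rw [Module.End.mul_apply, Module.End.mul_apply, hij, map_smul]
  by_cases h : aeval T f (B i) = 0
  · rw [annihilatedProj_apply_of_eq_zero h, annihilatedProj_apply_of_eq_zero (hiff.2 h), hij]
  · rw [annihilatedProj_apply_of_ne_zero h, annihilatedProj_apply_of_ne_zero (hiff.not.2 h),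
      map_zero, smul_zero]

theorem coord_annihilatedProj {j : ι} (h : aeval T f (B j) = 0) (v : V) :
    B.repr (annihilatedProj B T f v) j = B.repr v j := by
  suffices B.coord j ∘ₗ annihilatedProj B T f = B.coord j from LinearMap.congr_fun this v
  refine B.ext fun i => ?_
  by_cases hi : aeval T f (B i) = 0
  · simp [annihilatedProj_apply_of_eq_zero hi]
  · have hij : i ≠ j := fun hij => hi (hij ▸ h)
    simp [annihilatedProj_apply_of_ne_zero hi, hij]

-- Projecting `v` to the span of the basis vectors killed by the annihilator `f` of `B j` gives a
-- nonzero vector killed by both `f(T)` and `P(T)`, so `f ∣ P`.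
theorem aeval_eq_zero_of_aeval_apply_eq_zero (hT : Function.Injective T)
    (hmono : ∀ i, ∃ j, ∃ c : F, T (B i) = c • B j)
    (hirr : ∀ i, ∃ f : F[X], Irreducible f ∧ aeval T f (B i) = 0) {v : V}
    (hv : ∀ i, B.repr v i ≠ 0) {P : F[X]} (hP : aeval T P v = 0) : aeval T P = 0 := by
  refine B.ext fun j => ?_
  obtain ⟨f, hf, hfj⟩ := hirr j
  have hproj : annihilatedProj B T f v ≠ 0 := fun h => hv j (by
    rw [← coord_annihilatedProj hfj, h, map_zero, Finsupp.zero_apply])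
  have hf_proj : aeval T f (annihilatedProj B T f v) = 0 :=
    LinearMap.congr_fun aeval_mul_annihilatedProj v
  have hP_proj : aeval T P (annihilatedProj B T f v) = 0 := by
    have hcomm := (commute_aeval_left (commute_annihilatedProj (f := f) hT hmono) P).eq
    simpa [hP] using LinearMap.congr_fun hcomm v
  obtain ⟨g, rfl⟩ := dvd_of_aeval_apply_eq_zero hf hproj hf_proj hP_proj
  simp [mul_comm f, hfj]

end

theorem linearIndependent_pow_apply {T : Module.End F V} {v : V}
    (hv : ∀ P : F[X], aeval T P v = 0 → aeval T P = 0) :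
    LinearIndependent F fun i : Fin (minpoly F T).natDegree => (T ^ (i : ℕ)) v := by
  refine (linearIndependent_pow T).map (f := LinearMap.applyₗ (R := F) (M₂ := V) v) ?_
  rw [Submodule.disjoint_def]
  intro S hS hSv
  have hle : Submodule.span F (Set.range fun i : Fin (minpoly F T).natDegree => T ^ (i : ℕ)) ≤
      Subalgebra.toSubmodule (Algebra.adjoin F {T}) := Submodule.span_le.2 <| by
    rintro _ ⟨i, rfl⟩
    exact pow_mem (Algebra.self_mem_adjoin_singleton F T) _
  obtain ⟨P, rfl⟩ := Algebra.adjoin_singleton_eq_range_aeval F T ▸ hle hS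
  exact hv P hSv

end Monomial

section Frobenius

variable {F L : Type*} [Field F] [Fintype F] [Field L] [Algebra F L]

theorem frobeniusAlgHom_toLinearMap_pow_apply (s : ℕ) (x : L) :
    ((FiniteField.frobeniusAlgHom F L).toLinearMap ^ s) x = x ^ Fintype.card F ^ s := by
  rw [Module.End.coe_pow]
  exact congrFun (pow_iterate (Fintype.card F) s) x

theorem linearIndependent_pow_card_pow_of_aeval_frobenius [FiniteDimensional F L] {α : L}
    (hα : ∀ P : F[X], aeval (FiniteField.frobeniusAlgHom F L).toLinearMap P α = 0 →
      aeval (FiniteField.frobeniusAlgHom F L).toLinearMap P = 0) :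
    LinearIndependent F fun i : Fin (finrank F L) => α ^ Fintype.card F ^ (i : ℕ) := by
  have : Finite L := Module.finite_of_finite F
  have hdeg :
      (minpoly F (FiniteField.frobeniusAlgHom F L).toLinearMap).natDegree = finrank F L := by
    rw [FiniteField.minpoly_frobeniusAlgHom, ← C_1, natDegree_X_pow_sub_C]
  have hli := linearIndependent_pow_apply hα
  rw [hdeg] at hli
  simpa only [frobeniusAlgHom_toLinearMap_pow_apply] using hli

-- If `q ^ s - 1 = n * w`, then `γ ^ (q ^ s) = a ^ w • γ`, so `γ` is a root of `X ^ s - a ^ w`.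
theorem KummerDegree.exists_irreducible_aeval_frobenius_eq_zero {n : ℕ}
    (hn : KummerDegree (Fintype.card F) n) {a : F} (ha : HasNoPrimeRoots n a) {γ : L}
    (hγ : γ ^ n = algebraMap F L a) :
    ∃ f : F[X], Irreducible f ∧
      aeval (FiniteField.frobeniusAlgHom F L).toLinearMap f γ = 0 := by
  obtain ⟨s, w, hsn, hw, hsw⟩ := hn.exists_pow_sub_one_eq_mul Fintype.one_lt_card
  refine ⟨X ^ s - C (a ^ w),
    (hn.of_dvd hsn).X_pow_sub_C_irreducible ((ha.of_dvd hsn).pow_of_coprime hsw), ?_⟩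
  have hfrob : γ ^ Fintype.card F ^ s = algebraMap F L (a ^ w) * γ := by
    rw [map_pow, ← hγ, ← pow_mul, ← hw, ← pow_succ, Nat.sub_add_cancel]
    exact Nat.one_le_pow _ _ Fintype.card_pos
  rw [map_sub, aeval_C, aeval_X_pow, LinearMap.sub_apply, Module.algebraMap_end_apply,
    frobeniusAlgHom_toLinearMap_pow_apply, hfrob, Algebra.smul_def, sub_self]

theorem KummerDegree.exists_irreducible_aeval_frobenius_pow_eq_zero {n : ℕ}
    (hn : KummerDegree (Fintype.card F) n) {a : F} (ha : HasNoPrimeRoots n a) {β : L}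
    (hβ : β ^ n = algebraMap F L a) (j : ℕ) :
    ∃ f : F[X], Irreducible f ∧
      aeval (FiniteField.frobeniusAlgHom F L).toLinearMap f (β ^ j) = 0 := by
  obtain ⟨e, k, hek, hne, hjk⟩ := Nat.exists_coprime n j
  have hen : e ∣ n := ⟨_, hne⟩
  refine (hn.of_dvd hen).exists_irreducible_aeval_frobenius_eq_zero
    ((ha.of_dvd hen).pow_of_coprime hek) ?_
  calc (β ^ j) ^ e = (β ^ (e * n.gcd j)) ^ k := by
        rw [← pow_mul, ← pow_mul]; congr 1; conv_lhs => rw [hjk]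
        ring
    _ = algebraMap F L (a ^ k) := by rw [← hne, hβ, map_pow]

/-- The basis `1, β, …, β ^ (n - 1)` of an extension of degree `n` generated by an `n`-th root. -/
noncomputable def KummerDegree.powBasis (hn : KummerDegree (Fintype.card F) (finrank F L)) {a : F}
    (ha : HasNoPrimeRoots (finrank F L) a) {β : L} (hβ : β ^ finrank F L = algebraMap F L a) :
    Basis (Fin (finrank F L)) F L :=
  have : Nonempty (Fin (finrank F L)) := ⟨⟨0, Nat.pos_of_ne_zero hn.ne_zero⟩⟩
  basisOfLinearIndependentOfCardEqFinrank (b := fun i => β ^ (i : ℕ)) (by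
    have hli := linearIndependent_pow (K := F) β
    rwa [hn.minpoly_eq_X_pow_sub_C ha hβ, natDegree_X_pow_sub_C] at hli) (Fintype.card_fin _)

theorem KummerDegree.powBasis_apply (hn : KummerDegree (Fintype.card F) (finrank F L)) {a : F}
    (ha : HasNoPrimeRoots (finrank F L) a) {β : L} (hβ : β ^ finrank F L = algebraMap F L a)
    (i : Fin (finrank F L)) : hn.powBasis ha hβ i = β ^ (i : ℕ) := by
  simp [powBasis]

theorem KummerDegree.aeval_frobenius_eq_zero_of_apply_geom_sum
    (hn : KummerDegree (Fintype.card F) (finrank F L)) {a : F}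
    (ha : HasNoPrimeRoots (finrank F L) a) {β : L} (hβ : β ^ finrank F L = algebraMap F L a)
    {P : F[X]} (hP : aeval (FiniteField.frobeniusAlgHom F L).toLinearMap P
      (∑ i ∈ Finset.range (finrank F L), β ^ i) = 0) :
    aeval (FiniteField.frobeniusAlgHom F L).toLinearMap P = 0 := by
  have hB := hn.powBasis_apply ha hβ
  have hsum : ∑ i ∈ Finset.range (finrank F L), β ^ i = ∑ i, hn.powBasis ha hβ i := by
    simp only [hB, Finset.sum_range]
  refine aeval_eq_zero_of_aeval_apply_eq_zero (B := hn.powBasis ha hβ)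
    (FiniteField.frobeniusAlgHom F L).injective (fun i => ?_)
    (fun i => hB i ▸ hn.exists_irreducible_aeval_frobenius_pow_eq_zero ha hβ i) (fun i => ?_) hP
  · refine ⟨⟨i * Fintype.card F % finrank F L, Nat.mod_lt _ (Nat.pos_of_ne_zero hn.ne_zero)⟩,
      a ^ (i * Fintype.card F / finrank F L), ?_⟩
    change hn.powBasis ha hβ i ^ Fintype.card F = _
    rw [hB, hB, Algebra.smul_def, map_pow, ← hβ, ← pow_mul, ← pow_mul, ← pow_add, Nat.div_add_mod]
  · simp [hsum, Finsupp.single_apply]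

theorem KummerDegree.linearIndependent_pow_card_pow
    (hn : KummerDegree (Fintype.card F) (finrank F L)) {a : F}
    (ha : HasNoPrimeRoots (finrank F L) a) {β : L} (hβ : β ^ finrank F L = algebraMap F L a)
    {u : F} (hu : u ≠ 0) {α : L} (hα : α * (1 - β) = algebraMap F L u) :
    LinearIndependent F fun i : Fin (finrank F L) => α ^ Fintype.card F ^ (i : ℕ) := by
  have : FiniteDimensional F L := Module.finite_of_finrank_pos (Nat.pos_of_ne_zero hn.ne_zero)
  have hu' : algebraMap F L u ≠ 0 := by simpa using hu
  have hβ1 : 1 - β ≠ 0 := right_ne_zero_of_mul (hα ▸ hu')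
  have hsum : ∑ i ∈ Finset.range (finrank F L), β ^ i = ((1 - a) / u) • α := by
    refine mul_left_cancel₀ hβ1 ?_
    calc (1 - β) * ∑ i ∈ Finset.range (finrank F L), β ^ i
        = algebraMap F L (1 - a) := by rw [mul_neg_geom_sum, hβ, map_sub, map_one]
      _ = ((1 - a) / u) • (α * (1 - β)) := by
          rw [hα, Algebra.smul_def, ← map_mul, div_mul_cancel₀ _ hu]
      _ = (1 - β) * ((1 - a) / u) • α := by rw [mul_smul_comm, mul_comm]
  refine linearIndependent_pow_card_pow_of_aeval_frobenius fun P hP =>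
    hn.aeval_frobenius_eq_zero_of_apply_geom_sum ha hβ ?_
  rw [hsum, map_smul, hP, smul_zero]

end Frobenius

section CompleteNormality

/-- The `r` conjugates `α ^ Q ^ i`, `i < r`, form a basis of `L` over the fixed field of
`x ↦ x ^ Q`. Coefficients are taken in `L` and required to be fixed, so that no subfield has to
be named. -/
def ConjugatesFormBasis {L : Type*} [Field L] (Q r : ℕ) (α : L) : Prop :=
  (∀ co : Fin r → L, (∀ i, co i ^ Q = co i) → ∑ i, co i * α ^ Q ^ (i : ℕ) = 0 → ∀ i, co i = 0) ∧
  ∀ x : L, ∃ co : Fin r → L, (∀ i, co i ^ Q = co i) ∧ x = ∑ i, co i * α ^ Q ^ (i : ℕ)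

theorem mem_range_algebraMap_of_pow_card_eq {F L : Type*} [Field F] [Fintype F] [Field L]
    [Algebra F L] [FiniteDimensional F L] {x : L} (hx : x ^ Fintype.card F = x) :
    x ∈ Set.range (algebraMap F L) := by
  have : Finite L := Module.finite_of_finite F
  rw [IsGalois.mem_range_algebraMap_iff_fixed]
  intro f
  obtain ⟨n, rfl⟩ := (FiniteField.bijective_frobeniusAlgEquivOfAlgebraic_pow F L).2 f
  simp only [AlgEquiv.coe_pow, FiniteField.coe_frobeniusAlgEquivOfAlgebraic]
  exact Function.iterate_fixed hx _

theorem conjugatesFormBasis_of_linearIndependent {F L : Type*} [Field F] [Fintype F] [Field L]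
    [Algebra F L] [FiniteDimensional F L] {α : L}
    (h : LinearIndependent F fun i : Fin (finrank F L) => α ^ Fintype.card F ^ (i : ℕ)) :
    ConjugatesFormBasis (Fintype.card F) (finrank F L) α := by
  constructor
  · intro co hco hsum i
    choose c hc using fun i => mem_range_algebraMap_of_pow_card_eq (hco i)
    rw [← hc, Fintype.linearIndependent_iff.1 h c (by simpa [Algebra.smul_def, hc] using hsum) i,
      map_zero]
  · intro x
    have : Nonempty (Fin (finrank F L)) := ⟨⟨0, finrank_pos⟩⟩
    let B := basisOfLinearIndependentOfCardEqFinrank h (Fintype.card_fin _)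
    refine ⟨fun i => algebraMap F L (B.repr x i), fun i => ?_, ?_⟩
    · rw [← map_pow, FiniteField.pow_card]
    · simpa [B, Algebra.smul_def] using (B.sum_repr x).symm

open IntermediateField in
-- For `n = m * r`, the subfield with `q ^ m` elements is generated by `β ^ r`, over which
-- `β` is again the root of a binomial meeting the same hypotheses.
theorem KummerDegree.conjugatesFormBasis {K L : Type*} [Field K] [Fintype K] [Field L]
    [Algebra K L] (hn : KummerDegree (Fintype.card K) (finrank K L)) {a : K}
    (ha : HasNoPrimeRoots (finrank K L) a) {β : L} (hβ : β ^ finrank K L = algebraMap K L a)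
    {u : K} (hu : u ≠ 0) {α : L} (hα : α * (1 - β) = algebraMap K L u) {m r : ℕ}
    (hmr : m * r = finrank K L) : ConjugatesFormBasis (Fintype.card K ^ m) r α := by
  have : FiniteDimensional K L := Module.finite_of_finrank_pos (Nat.pos_of_ne_zero hn.ne_zero)
  have hm := hn.of_dvd ⟨r, hmr.symm⟩
  have hr := hn.of_dvd ⟨m, (mul_comm r m).trans hmr |>.symm⟩
  have hβr : (β ^ r) ^ m = algebraMap K L a := by rw [← pow_mul, mul_comm, hmr, hβ]
  have hmin := hm.minpoly_eq_X_pow_sub_C (ha.of_dvd ⟨r, hmr.symm⟩) hβr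
  have hKF : finrank K K⟮β ^ r⟯ = m := by
    rw [adjoin.finrank (Algebra.IsIntegral.isIntegral _), hmin, natDegree_X_pow_sub_C]
  have hFL : finrank K⟮β ^ r⟯ L = r := by
    refine Nat.eq_of_mul_eq_mul_left (Nat.pos_of_ne_zero hm.ne_zero) ?_
    rw [hmr, ← finrank_mul_finrank K K⟮β ^ r⟯ L, hKF]
  have : Finite K⟮β ^ r⟯ := Module.finite_of_finite K
  let _ : Fintype K⟮β ^ r⟯ := Fintype.ofFinite _
  have hcard : Fintype.card K⟮β ^ r⟯ = Fintype.card K ^ m := by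
    rw [Module.card_eq_pow_finrank (K := K), hKF]
  have hgen : HasNoPrimeRoots r (AdjoinSimple.gen K (β ^ r)) :=
    (ha.of_dvd ⟨m, (mul_comm r m).trans hmr |>.symm⟩).adjoinSimple_gen hm.ne_zero hmin
      hr.exists_pow_eq_neg_one
  have hli := KummerDegree.linearIndependent_pow_card_pow (F := K⟮β ^ r⟯) (L := L) (β := β)
    (α := α) (u := algebraMap K _ u) (a := AdjoinSimple.gen K (β ^ r))
    (by rw [hcard, hFL]; exact hr.pow_left m) (by rwa [hFL])
    (by rw [hFL, AdjoinSimple.algebraMap_gen]) (by simpa using hu) hα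
  simpa only [hcard, hFL] using conjugatesFormBasis_of_linearIndependent hli

end CompleteNormality

section Pmat

variable {K : Type} [Field K] {a b c d : K}

theorem Pmat_eq_aeval_homogenize (f : K[X]) :
    Pmat a b c d f =
      MvPolynomial.aeval ![C a * X + C b, C c * X + C d] (f.homogenize f.natDegree) := by
  rw [homogenize, map_sum, Finset.Nat.sum_antidiagonal_eq_sum_range_succ_mk, Pmat]
  refine Finset.sum_congr rfl fun i _ => ?_
  simp [MvPolynomial.aeval_monomial, Finsupp.prod_fintype, mul_assoc]

theorem Pmat_mul (f g : K[X]) :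
    Pmat a b c d (f * g) = Pmat a b c d f * Pmat a b c d g := by
  rcases eq_or_ne f 0 with rfl | hf
  · simp [Pmat]
  rcases eq_or_ne g 0 with rfl | hg
  · simp [Pmat]
  simp only [Pmat_eq_aeval_homogenize, natDegree_mul hf hg, homogenize_mul f g le_rfl le_rfl,
    map_mul]

theorem natDegree_Pmat_le (f : K[X]) : (Pmat a b c d f).natDegree ≤ f.natDegree := by
  refine natDegree_sum_le_of_forall_le _ _ fun i hi => ?_
  have hi' : i ≤ f.natDegree := Finset.mem_range_succ_iff.1 hi
  calc (C (f.coeff i) * (C a * X + C b) ^ i * (C c * X + C d) ^ (f.natDegree - i)).natDegree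
      ≤ 0 + i * 1 + (f.natDegree - i) * 1 := by
        refine natDegree_mul_le_of_le (natDegree_mul_le_of_le (natDegree_C _).le ?_) ?_
        · exact natDegree_pow_le_of_le i natDegree_linear_le
        · exact natDegree_pow_le_of_le _ natDegree_linear_le
    _ = f.natDegree := by omega

theorem coeff_natDegree_Pmat (hc : c ≠ 0) (f : K[X]) :
    (Pmat a b c d f).coeff f.natDegree = c ^ f.natDegree * f.eval (a / c) := by
  rw [Pmat, finsetSum_coeff, eval_eq_sum_range, Finset.mul_sum]
  refine Finset.sum_congr rfl fun i hi => ?_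
  obtain ⟨j, hj⟩ := Nat.exists_eq_add_of_le (Finset.mem_range_succ_iff.1 hi)
  have hcoeff (a b : K) (k : ℕ) : ((C a * X + C b) ^ k).coeff k = a ^ k := by
    simpa using coeff_pow_of_natDegree_le (m := k) (natDegree_linear_le (a := a) (b := b))
  rw [hj, Nat.add_sub_cancel_left, mul_assoc, coeff_C_mul, coeff_mul_add_eq_of_natDegree_le,
    hcoeff, hcoeff]
  · rw [div_pow, pow_add]
    field_simp
  · simpa using natDegree_pow_le_of_le i (natDegree_linear_le (a := a) (b := b))
  · simpa using natDegree_pow_le_of_le j (natDegree_linear_le (a := c) (b := d))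

theorem natDegree_Pmat (hc : c ≠ 0) {f : K[X]} (hf : f.eval (a / c) ≠ 0) :
    (Pmat a b c d f).natDegree = f.natDegree :=
  natDegree_eq_of_le_of_coeff_ne_zero (natDegree_Pmat_le f)
    (coeff_natDegree_Pmat hc f ▸ mul_ne_zero (pow_ne_zero _ hc) hf)

theorem homogenize_Pmat (f : K[X]) :
    (Pmat a b c d f).homogenize f.natDegree = MvPolynomial.aeval
      ![MvPolynomial.C a * MvPolynomial.X 0 + MvPolynomial.C b * MvPolynomial.X 1,
        MvPolynomial.C c * MvPolynomial.X 0 + MvPolynomial.C d * MvPolynomial.X 1]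
      (f.homogenize f.natDegree) := by
  refine homogenize_eq_of_isHomogeneous ?_ ?_
  · have hlin (a b : K) :
        (MvPolynomial.C a * MvPolynomial.X 0 + MvPolynomial.C b * MvPolynomial.X 1 :
          MvPolynomial (Fin 2) K).IsHomogeneous 1 :=
      ((MvPolynomial.isHomogeneous_X K 0).C_mul a).add ((MvPolynomial.isHomogeneous_X K 1).C_mul b)
    simpa only [one_mul] using (isHomogeneous_homogenize f).aeval _ (n := 1) fun i => by
      fin_cases i <;> exact hlin _ _
  · rw [Pmat_eq_aeval_homogenize, ← AlgHom.comp_apply]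
    congr 1
    refine MvPolynomial.algHom_ext fun i => ?_
    fin_cases i <;> simp

theorem Pmat_Pmat {a' b' c' d' : K} {f : K[X]}
    (hf : (Pmat a b c d f).natDegree = f.natDegree) :
    Pmat a' b' c' d' (Pmat a b c d f) =
      Pmat (a * a' + b * c') (a * b' + b * d') (c * a' + d * c') (c * b' + d * d') f := by
  rw [Pmat_eq_aeval_homogenize, hf, homogenize_Pmat, Pmat_eq_aeval_homogenize, ← AlgHom.comp_apply]
  congr 1
  refine MvPolynomial.algHom_ext fun i => ?_
  fin_cases i <;> simp <;> ring

theorem Pmat_one (f : K[X]) : Pmat 1 0 0 1 f = f := by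
  simpa [Pmat] using (as_sum_range_C_mul_X_pow f).symm

/-- The transform `P_{σ⁻¹}` for `σ = [[a, b], [c, d]]`; `Rsigma a b c d t` unfolds to
`PmatInv a b c d ∘ St t ∘ Pmat a b c d`. -/
noncomputable def PmatInv (a b c d : K) (f : K[X]) : K[X] :=
  Pmat (d / (a * d - b * c)) (-b / (a * d - b * c)) (-c / (a * d - b * c)) (a / (a * d - b * c)) f

theorem PmatInv_Pmat (hdet : a * d - b * c ≠ 0) {f : K[X]}
    (hf : (Pmat a b c d f).natDegree = f.natDegree) : PmatInv a b c d (Pmat a b c d f) = f := by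
  rw [PmatInv, Pmat_Pmat hf]
  generalize hΔ : a * d - b * c = Δ at hdet ⊢
  convert Pmat_one f using 1
  congr 1 <;> field_simp <;> first | ring1 | linear_combination hΔ

theorem Pmat_PmatInv (hdet : a * d - b * c ≠ 0) {f : K[X]}
    (hf : (PmatInv a b c d f).natDegree = f.natDegree) : Pmat a b c d (PmatInv a b c d f) = f := by
  rw [PmatInv, Pmat_Pmat hf]
  generalize hΔ : a * d - b * c = Δ at hdet ⊢
  convert Pmat_one f using 1
  congr 1 <;> field_simp <;> first | ring1 | linear_combination hΔ

theorem natDegree_PmatInv (hdet : a * d - b * c ≠ 0) (hc : c ≠ 0) {f : K[X]}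
    (hf : f.eval (-d / c) ≠ 0) : (PmatInv a b c d f).natDegree = f.natDegree := by
  refine natDegree_Pmat (div_ne_zero (neg_ne_zero.2 hc) hdet) ?_
  rwa [div_div_div_cancel_right₀ hdet, div_neg, ← neg_div]

theorem isUnit_of_isUnit_Pmat {f : K[X]} (hf : f ≠ 0)
    (hdeg : (Pmat a b c d f).natDegree = f.natDegree) (h : IsUnit (Pmat a b c d f)) :
    IsUnit f := by
  rw [isUnit_iff_degree_eq_zero, degree_eq_natDegree hf, ← hdeg, natDegree_eq_zero_of_isUnit h,
    Nat.cast_zero]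

theorem irreducible_Pmat (hdet : a * d - b * c ≠ 0) {f : K[X]} (hf : Irreducible f)
    (hdeg : (Pmat a b c d f).natDegree = f.natDegree) : Irreducible (Pmat a b c d f) := by
  refine ⟨fun h => hf.not_isUnit (isUnit_of_isUnit_Pmat hf.ne_zero hdeg h), fun g h hgh => ?_⟩
  have hfactor : f = PmatInv a b c d g * PmatInv a b c d h := by
    rw [← PmatInv_Pmat hdet hdeg, hgh]
    exact Pmat_mul g h
  have hne : PmatInv a b c d g * PmatInv a b c d h ≠ 0 := hfactor ▸ hf.ne_zero
  have hzero : PmatInv a b c d 0 = 0 := by simp [PmatInv, Pmat]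
  have hg : g ≠ 0 := fun hg => left_ne_zero_of_mul hne (hg ▸ hzero)
  have hh : h ≠ 0 := fun hh => right_ne_zero_of_mul hne (hh ▸ hzero)
  have hsum : (PmatInv a b c d g).natDegree + (PmatInv a b c d h).natDegree =
      g.natDegree + h.natDegree := by
    rw [← natDegree_mul (left_ne_zero_of_mul hne) (right_ne_zero_of_mul hne), ← hfactor,
      ← natDegree_mul hg hh, ← hgh, hdeg]
  have hgle : (PmatInv a b c d g).natDegree ≤ g.natDegree := natDegree_Pmat_le g
  have hhle : (PmatInv a b c d h).natDegree ≤ h.natDegree := natDegree_Pmat_le h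
  have hgdeg : (PmatInv a b c d g).natDegree = g.natDegree := by omega
  have hhdeg : (PmatInv a b c d h).natDegree = h.natDegree := by omega
  exact (hf.isUnit_or_isUnit hfactor).imp (isUnit_of_isUnit_Pmat hg hgdeg)
    (isUnit_of_isUnit_Pmat hh hhdeg)

theorem det_PmatInv_ne_zero (hdet : a * d - b * c ≠ 0) :
    d / (a * d - b * c) * (a / (a * d - b * c)) -
      -b / (a * d - b * c) * (-c / (a * d - b * c)) ≠ 0 := by
  rw [div_mul_div_comm, div_mul_div_comm, ← sub_div, neg_mul_neg, mul_comm d]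
  exact div_ne_zero hdet (mul_ne_zero hdet hdet)

theorem irreducible_PmatInv (hdet : a * d - b * c ≠ 0) {f : K[X]} (hf : Irreducible f)
    (hdeg : (PmatInv a b c d f).natDegree = f.natDegree) : Irreducible (PmatInv a b c d f) :=
  irreducible_Pmat (det_PmatInv_ne_zero hdet) hf hdeg

section Aeval

variable {E : Type*} [Field E] [Algebra K E]

theorem aeval_Pmat (f : K[X]) {x : E} (hx : algebraMap K E c * x + algebraMap K E d ≠ 0) :
    aeval x (Pmat a b c d f) = (algebraMap K E c * x + algebraMap K E d) ^ f.natDegree *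
      aeval ((algebraMap K E a * x + algebraMap K E b) /
        (algebraMap K E c * x + algebraMap K E d)) f := by
  rw [aeval_eq_sum_range (p := f), Finset.mul_sum, Pmat, map_sum]
  refine Finset.sum_congr rfl fun i hi => ?_
  obtain ⟨j, hj⟩ := Nat.exists_eq_add_of_le (Finset.mem_range_succ_iff.1 hi)
  simp only [map_mul, map_pow, map_add, aeval_C, aeval_X, Algebra.smul_def]
  generalize algebraMap K E c * x + algebraMap K E d = y at hx ⊢
  rw [hj, Nat.add_sub_cancel_left, div_pow, pow_add]
  field_simp

theorem aeval_Pmat_of_eq_zero (f : K[X]) {x : E}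
    (hx : algebraMap K E c * x + algebraMap K E d = 0) :
    aeval x (Pmat a b c d f) = algebraMap K E f.leadingCoeff *
      (algebraMap K E a * x + algebraMap K E b) ^ f.natDegree := by
  rw [Pmat, map_sum, Finset.sum_range_succ, Finset.sum_eq_zero fun i hi => ?_]
  · simp
  · have hi' : f.natDegree - i ≠ 0 := Nat.sub_ne_zero_of_lt (Finset.mem_range.1 hi)
    simp [hx, hi']

theorem ne_zero_of_aeval_Pmat_eq_zero (hdet : a * d - b * c ≠ 0) {f : K[X]} (hf : f ≠ 0) {x : E}
    (hx : aeval x (Pmat a b c d f) = 0) : algebraMap K E c * x + algebraMap K E d ≠ 0 := by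
  intro h0
  have hlead : algebraMap K E f.leadingCoeff ≠ 0 := by simpa using hf
  rw [aeval_Pmat_of_eq_zero f h0, mul_eq_zero, or_iff_right hlead] at hx
  have hnum := eq_zero_of_pow_eq_zero hx
  refine hdet ((algebraMap K E).injective ?_)
  rw [map_sub, map_mul, map_mul, map_zero]
  linear_combination algebraMap K E a * h0 - algebraMap K E c * hnum

theorem exists_aeval_eq_zero_of_aeval_PmatInv_eq_zero (hdet : a * d - b * c ≠ 0) {f : K[X]}
    (hf : f ≠ 0) {α : E} (hα : aeval α (PmatInv a b c d f) = 0) :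
    ∃ β : E, aeval β f = 0 ∧ algebraMap K E d * α - algebraMap K E b =
      β * (algebraMap K E a - algebraMap K E c * α) := by
  have hne := ne_zero_of_aeval_Pmat_eq_zero (det_PmatInv_ne_zero hdet) hf hα
  rw [PmatInv, aeval_Pmat f hne, mul_eq_zero, or_iff_right (pow_ne_zero _ hne)] at hα
  refine ⟨_, hα, ?_⟩
  have hΔ : algebraMap K E (a * d - b * c) ≠ 0 := by simpa only [ne_eq, map_eq_zero] using hdet
  rw [div_mul_eq_mul_div, eq_div_iff hne]
  simp only [map_div₀, map_neg]
  field_simp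
  ring

end Aeval

end Pmat

section Rsigma

variable {K : Type} [Field K] {a b c d : K}

theorem St_St (t n : ℕ) (f : K[X]) : St t (St n f) = St (n * t) f := by
  simp only [St, comp_assoc, X_pow_comp, ← pow_mul, mul_comm]

theorem eq_PmatInv_St_of_forall_eq_Rsigma (hdet : a * d - b * c ≠ 0) {t : ℕ} {f : K[X]}
    (hf : ∀ k, (PmatInv a b c d (St (t ^ k) f)).natDegree = (St (t ^ k) f).natDegree)
    {G : ℕ → K[X]} (hG0 : G 0 = PmatInv a b c d f)
    (hG : ∀ k, G (k + 1) = Rsigma a b c d t (G k)) (k : ℕ) :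
    G k = PmatInv a b c d (St (t ^ k) f) := by
  induction k with
  | zero => simpa [St] using hG0
  | succ k ih =>
    calc G (k + 1) = PmatInv a b c d (St t (Pmat a b c d (G k))) := hG k
      _ = PmatInv a b c d (St (t ^ (k + 1)) f) := by
        rw [ih, Pmat_PmatInv hdet (hf k), St_St, pow_succ]

/-- The element `η(X - A; σ)`: up to a unit, `P_σ(X - A)` is `X - etaRsigma a b c d A`. -/
def etaRsigma (a b c d A : K) : K :=
  -d / c * ((b / d - A) * (a / c - A)⁻¹)

variable {A : K}

theorem sub_mul_ne_zero_of_ne_div (hc : c ≠ 0) (hA : A ≠ a / c) : a - A * c ≠ 0 :=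
  fun h => hA ((eq_div_iff hc).2 (sub_eq_zero.1 h).symm)

theorem mul_etaRsigma (hc : c ≠ 0) (hd : d ≠ 0) (hA : A ≠ a / c) :
    (a - A * c) * etaRsigma a b c d A = A * d - b := by
  have hA' := sub_mul_ne_zero_of_ne_div hc hA
  have hdiff : a / c - A = (a - A * c) / c := by field_simp
  rw [etaRsigma, hdiff]
  field_simp
  ring

theorem Pmat_X_sub_C (hc : c ≠ 0) (hd : d ≠ 0) (hA : A ≠ a / c) :
    Pmat a b c d (X - C A) = C (a - A * c) * (X - C (etaRsigma a b c d A)) := by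
  rw [mul_sub, ← C_mul, mul_etaRsigma hc hd hA]
  rw [Pmat, natDegree_X_sub_C, Finset.sum_range_succ, Finset.sum_range_one]
  simp only [coeff_sub, coeff_X_zero, coeff_X_one, coeff_C_zero, coeff_C_of_ne_zero one_ne_zero,
    map_sub, map_mul, map_zero, map_one]
  ring

theorem etaRsigma_ne_neg_div (hdet : a * d - b * c ≠ 0) (hc : c ≠ 0) (hd : d ≠ 0)
    (hA : A ≠ a / c) : etaRsigma a b c d A ≠ -d / c := by
  intro h
  have hmul := mul_etaRsigma (b := b) hc hd hA
  rw [h] at hmul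
  field_simp at hmul
  exact hdet (by linear_combination -hmul)

theorem neg_div_pow_ne_etaRsigma (hdet : a * d - b * c ≠ 0) (hc : c ≠ 0) (hd : d ≠ 0)
    (hA : A ≠ a / c) {n : ℕ} (hη : HasNoPrimeRoots n (etaRsigma a b c d A)) :
    (-d / c) ^ n ≠ etaRsigma a b c d A := by
  rcases eq_or_ne n 1 with rfl | hn
  · simpa using (etaRsigma_ne_neg_div hdet hc hd hA).symm
  · exact hη.ne_pow hn _

theorem St_C_mul_X_sub_C (n : ℕ) (w η : K) : St n (C w * (X - C η)) = C w * (X ^ n - C η) := by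
  simp [St]

theorem natDegree_PmatInv_C_mul_X_pow_sub_C (hdet : a * d - b * c ≠ 0) (hc : c ≠ 0) {w η : K}
    (hw : w ≠ 0) {n : ℕ} (hη : (-d / c) ^ n ≠ η) :
    (PmatInv a b c d (C w * (X ^ n - C η))).natDegree = n := by
  rw [natDegree_PmatInv hdet hc, natDegree_C_mul hw, natDegree_X_pow_sub_C]
  simpa [hw, sub_eq_zero] using hη

theorem exists_forall_eq_PmatInv (hdet : a * d - b * c ≠ 0) (hc : c ≠ 0) (hd : d ≠ 0)
    (hA : A ≠ a / c) {t : ℕ} (ht : ∀ k, (-d / c) ^ t ^ k ≠ etaRsigma a b c d A) {G : ℕ → K[X]}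
    (hG0 : G 0 = X - C A) (hG : ∀ k, G (k + 1) = Rsigma a b c d t (G k)) :
    ∃ w : K, w ≠ 0 ∧ ∀ k, G k = PmatInv a b c d (C w * (X ^ t ^ k - C (etaRsigma a b c d A))) := by
  have hw := sub_mul_ne_zero_of_ne_div hc hA
  refine ⟨a - A * c, hw, fun k => ?_⟩
  simp only [← St_C_mul_X_sub_C, ← Pmat_X_sub_C hc hd hA]
  refine eq_PmatInv_St_of_forall_eq_Rsigma hdet (fun k => ?_) ?_ hG k
  · rw [Pmat_X_sub_C hc hd hA, St_C_mul_X_sub_C,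
      natDegree_PmatInv_C_mul_X_pow_sub_C hdet hc hw (ht k), natDegree_C_mul hw,
      natDegree_X_pow_sub_C]
  · rw [hG0, PmatInv_Pmat hdet (natDegree_Pmat hc _)]
    simpa [sub_eq_zero] using hA.symm

-- As `a = 0` or `b = 0`, solving `(dα - b) / (a - cα) = β` for `α` gives `u / (1 - γ)` with `γ`
-- a multiple of `β` or of `β⁻¹`.
theorem exists_mul_one_sub_eq {L : Type*} [Field L] [Algebra K L] (hdet : a * d - b * c ≠ 0)
    (hc : c ≠ 0) (hd : d ≠ 0) (hab : a * b = 0) {n : ℕ} {η : K} (hη : HasNoPrimeRoots n η)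
    {α β : L} (hβ0 : β ≠ 0) (hβ : β ^ n = algebraMap K L η)
    (hαβ : algebraMap K L d * α - algebraMap K L b =
      β * (algebraMap K L a - algebraMap K L c * α)) :
    ∃ (u θ : K) (γ : L), u ≠ 0 ∧ HasNoPrimeRoots n θ ∧ γ ^ n = algebraMap K L θ ∧
      α * (1 - γ) = algebraMap K L u := by
  have hc' : algebraMap K L c ≠ 0 := by simpa using hc
  have hd' : algebraMap K L d ≠ 0 := by simpa using hd
  rcases mul_eq_zero.1 hab with rfl | rfl
  · refine ⟨b / d, (-c / d) ^ n * η, algebraMap K L (-c / d) * β, ?_,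
      hη.pow_mul (div_ne_zero (neg_ne_zero.2 hc) hd),
      by simp only [mul_pow, hβ, map_mul, map_pow], ?_⟩
    · exact div_ne_zero (fun hb => hdet (by simp [hb])) hd
    · simp only [map_div₀, map_neg, map_zero] at hαβ ⊢
      field_simp
      linear_combination hαβ
  · refine ⟨a / c, (-d / c) ^ n * η⁻¹, algebraMap K L (-d / c) * β⁻¹, ?_,
      hη.inv.pow_mul (div_ne_zero (neg_ne_zero.2 hd) hc),
      by simp only [mul_pow, inv_pow, hβ, map_mul, map_pow, map_inv₀], ?_⟩
    · exact div_ne_zero (fun ha => hdet (by simp [ha])) hc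
    · simp only [map_div₀, map_neg, map_zero] at hαβ ⊢
      field_simp
      linear_combination hαβ

theorem irreducible_PmatInv_C_mul_X_pow_sub_C [Fintype K] (hdet : a * d - b * c ≠ 0) (hc : c ≠ 0)
    {w η : K} (hw : w ≠ 0) {n : ℕ} (hn : KummerDegree (Fintype.card K) n)
    (hη : HasNoPrimeRoots n η) (hpow : (-d / c) ^ n ≠ η) :
    Irreducible (PmatInv a b c d (C w * (X ^ n - C η))) := by
  refine irreducible_PmatInv hdet ?_ ?_
  · exact (irreducible_isUnit_mul (isUnit_C.2 hw.isUnit)).2 (hn.X_pow_sub_C_irreducible hη)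
  · rw [natDegree_PmatInv_C_mul_X_pow_sub_C hdet hc hw hpow, natDegree_C_mul hw,
      natDegree_X_pow_sub_C]

theorem conjugatesFormBasis_of_aeval_PmatInv_eq_zero [Fintype K] {L : Type*} [Field L]
    [Algebra K L] (hdet : a * d - b * c ≠ 0) (hc : c ≠ 0) (hd : d ≠ 0) (hab : a * b = 0) {w η : K}
    (hw : w ≠ 0) (hη0 : η ≠ 0) (hn : KummerDegree (Fintype.card K) (finrank K L))
    (hη : HasNoPrimeRoots (finrank K L) η) {α : L}
    (hα : aeval α (PmatInv a b c d (C w * (X ^ finrank K L - C η))) = 0) {m r : ℕ}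
    (hmr : m * r = finrank K L) : ConjugatesFormBasis (Fintype.card K ^ m) r α := by
  have hpoly : C w * (X ^ finrank K L - C η) ≠ 0 :=
    mul_ne_zero (C_ne_zero.2 hw) (X_pow_sub_C_ne_zero (Nat.pos_of_ne_zero hn.ne_zero) η)
  obtain ⟨β, hβ, hαβ⟩ := exists_aeval_eq_zero_of_aeval_PmatInv_eq_zero hdet hpoly hα
  have hβη : β ^ finrank K L = algebraMap K L η := by simpa [hw, sub_eq_zero] using hβ
  have hβ0 : β ≠ 0 := by
    rintro rfl
    rw [zero_pow hn.ne_zero, eq_comm, map_eq_zero] at hβη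
    exact hη0 hβη
  obtain ⟨u, θ, γ, hu, hθ, hγ, hαγ⟩ := exists_mul_one_sub_eq hdet hc hd hab hη hβ0 hβη hαβ
  exact hn.conjugatesFormBasis hθ hγ hu hαγ hmr

end Rsigma

/-- Theorem (main theorem, case i)): with `g₀ = x - A`, `A ≠ a/c`, `t ≥ 2` all of whose
prime factors divide `q - 1`, `σ = [[a,b],[c,d]] ∈ GL₂(F_q)` with `cd ≠ 0`, `ab = 0`,
`η(g₀;σ) = (-d/c)·g₀(b/d)·g₀(a/c)⁻¹` not an `ℓ`-th power for any prime `ℓ ∣ t`, and `t`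
odd when `q ≡ 3 (mod 4)`: every iterate `g_k = g_{k-1}^{R_{σ,t}}` is irreducible of degree
`t^k` and all its roots are completely normal over `F_q` (for each divisor `m` of `t^k`,
the conjugates `α^{q^{m i}}` form a basis over the fixed field of `x ↦ x^{q^m}`). -/
theorem stmt_19 (K : Type) [Field K] [Fintype K] (q : ℕ) (hq : Fintype.card K = q)
    (a b c d A : K) (hdet : a * d - b * c ≠ 0) (hcd : c * d ≠ 0) (hab : a * b = 0)
    (hA : A ≠ a / c)
    (t : ℕ) (ht : 2 ≤ t) (htq : ∀ ℓ : ℕ, ℓ.Prime → ℓ ∣ t → ℓ ∣ q - 1)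
    (hq3 : q % 4 = 3 → Odd t)
    (heta : ∀ ℓ : ℕ, ℓ.Prime → ℓ ∣ t →
      ¬ ∃ y : K, y ^ ℓ = (-d / c) * ((b / d - A) * (a / c - A)⁻¹))
    (G : ℕ → Polynomial K) (hG0 : G 0 = (X : Polynomial K) - C A)
    (hGrec : ∀ k, G (k + 1) = Rsigma a b c d t (G k)) :
    ∀ k, Irreducible (G k) ∧ (G k).natDegree = t ^ k ∧
      ∀ (L : Type) [Field L] [Algebra K L], Module.finrank K L = t ^ k →
        ∀ α : L, aeval α (G k) = 0 →
          ∀ m : ℕ, m ∣ t ^ k →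
            (∀ co : Fin (t ^ k / m) → L, (∀ i, co i ^ q ^ m = co i) →
              ∑ i, co i * α ^ q ^ (m * (i : ℕ)) = 0 → ∀ i, co i = 0) ∧
            (∀ x : L, ∃ co : Fin (t ^ k / m) → L, (∀ i, co i ^ q ^ m = co i) ∧
              x = ∑ i, co i * α ^ q ^ (m * (i : ℕ))) := by
  subst hq
  obtain ⟨hc, hd⟩ := mul_ne_zero_iff.1 hcd
  have hη : HasNoPrimeRoots t (etaRsigma a b c d A) := fun ℓ hℓ hℓt y hy => heta ℓ hℓ hℓt ⟨y, hy⟩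
  have hη0 : etaRsigma a b c d A ≠ 0 := hη.ne_zero (by omega)
  have htK : KummerDegree (Fintype.card K) t := .of_odd_of_mod_four_eq_three (by omega) htq hq3
  have hpow (k : ℕ) := neg_div_pow_ne_etaRsigma hdet hc hd hA (hη.pow_right k)
  obtain ⟨w, hw, hG⟩ := exists_forall_eq_PmatInv hdet hc hd hA hpow hG0 hGrec
  intro k
  rw [hG k]
  refine ⟨irreducible_PmatInv_C_mul_X_pow_sub_C hdet hc hw (htK.pow_right k) (hη.pow_right k)
    (hpow k), natDegree_PmatInv_C_mul_X_pow_sub_C hdet hc hw (hpow k), ?_⟩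
  intro L _ _ hL α hα m hm
  simp only [pow_mul]
  rw [← hL] at hα hm ⊢
  exact conjugatesFormBasis_of_aeval_PmatInv_eq_zero hdet hc hd hab hw hη0
    (hL ▸ htK.pow_right k) (hL ▸ hη.pow_right k) hα (Nat.mul_div_cancel' hm)
end
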